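/- arXiv:1908.08826 — 2 statements merged into one kernel-verified Lean document; each statement's English description precedes it below -/
import Mathlib

section
/- Suppose H ≤ G are groups of type VFP, H has finite index in G, and both have well-defined Euler characteristics. Then χ(H) = [G : H] · χ(G). -/
open CategoryTheory

noncomputable def trivialZMod (G : Type) [Group G] : ModuleCat (MonoidAlgebra ℤ G) :=
  (Rep.equivalenceModuleMonoidAlgebra.functor.obj (Rep.trivial ℤ G ℤ))

def TypeFP (G : Type) [Group G] : Prop :=
  ∃ (P : ProjectiveResolution (trivialZMod G)) (n : ℕ),
    (∀ i, Module.Finite (MonoidAlgebra ℤ G) (P.complex.X i)) ∧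
    ∀ i, n < i → Subsingleton (P.complex.X i)

def TypeVFP (G : Type) [Group G] : Prop :=
  ∃ K : Subgroup G, K.index ≠ 0 ∧ TypeFP K

/-- `HasFreeResOfRanks G n r`: the trivial `ℤG`-module `ℤ` admits a free resolution of
length `≤ n` in which the `i`-th module is free of finite rank `r i`. -/
def HasFreeResOfRanks (G : Type) [Group G] (n : ℕ) (r : ℕ → ℕ) : Prop :=
  ∃ P : ProjectiveResolution (trivialZMod G),
    (∀ i, Nonempty ((P.complex.X i) ≃ₗ[MonoidAlgebra ℤ G]
      (Fin (r i) →₀ MonoidAlgebra ℤ G))) ∧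
    ∀ i, n < i → r i = 0

/-- `EulerCharRel G q` asserts that the Euler characteristic of the type-`VFP` group `G`
(in the sense of Brown) equals the rational number `q`: some finite-index subgroup `K`
has a finite free resolution of the trivial module, and `q` is the alternating sum of
the ranks divided by the index `[G : K]`. -/
def EulerCharRel (G : Type) [Group G] (q : ℚ) : Prop :=
  ∃ (K : Subgroup G) (n : ℕ) (r : ℕ → ℕ), K.index ≠ 0 ∧
    HasFreeResOfRanks K n r ∧
    q = (∑ i ∈ Finset.range (n + 1), (-1 : ℚ) ^ i * r i) / K.index


/-- `HasFreeResEulerChar R n M k`: the `R`-module `M` has a resolution of length less than `n` by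
free modules of finite rank, the alternating sum of whose ranks is `k`. -/
def HasFreeResEulerChar (R : Type) [Ring R] :
    ℕ → (M : Type) → [AddCommGroup M] → [Module R M] → ℤ → Prop
  | 0, M, _, _, k => Subsingleton M ∧ k = 0
  | n + 1, M, _, _, k => ∃ (a : ℕ) (f : (Fin a →₀ R) →ₗ[R] M),
      Function.Surjective f ∧ HasFreeResEulerChar R n (LinearMap.ker f) (a - k)

namespace HasFreeResEulerChar

section Ring

variable {R : Type} [Ring R]

theorem of_linearEquiv {n : ℕ} {M N : Type} [AddCommGroup M] [Module R M] [AddCommGroup N]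
    [Module R N] {k : ℤ} (h : HasFreeResEulerChar R n M k) (e : M ≃ₗ[R] N) :
    HasFreeResEulerChar R n N k := by
  cases n with
  | zero => exact ⟨have := h.1; e.symm.injective.subsingleton, h.2⟩
  | succ n =>
    obtain ⟨a, f, hf, h⟩ := h
    refine ⟨a, e.toLinearMap ∘ₗ f, e.surjective.comp hf, ?_⟩
    rwa [LinearEquiv.ker_comp]

theorem mono {n m : ℕ} (hnm : n ≤ m) {M : Type} [AddCommGroup M] [Module R M] {k : ℤ}
    (h : HasFreeResEulerChar R n M k) : HasFreeResEulerChar R m M k := by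
  induction m generalizing n M k with
  | zero =>
    obtain rfl : n = 0 := by omega
    exact h
  | succ m ih =>
    cases n with
    | zero =>
      obtain ⟨hM, rfl⟩ := h
      exact ⟨0, 0, fun x => ⟨0, Subsingleton.elim _ _⟩,
        ih (Nat.zero_le m) ⟨inferInstance, by simp⟩⟩
    | succ n =>
      obtain ⟨a, f, hf, h⟩ := h
      exact ⟨a, f, hf, ih (by omega) h⟩

theorem of_surjective {n a : ℕ} {F M : Type} [AddCommGroup F] [Module R F] [AddCommGroup M]
    [Module R M] {k : ℤ} (e : F ≃ₗ[R] (Fin a →₀ R)) (f : F →ₗ[R] M)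
    (hf : Function.Surjective f) (h : HasFreeResEulerChar R n (LinearMap.ker f) k) :
    HasFreeResEulerChar R (n + 1) M (a - k) := by
  refine ⟨a, f ∘ₗ e.symm.toLinearMap, hf.comp e.symm.surjective, ?_⟩
  rw [sub_sub_cancel]
  refine h.of_linearEquiv (LinearEquiv.ofSubmodules e _ _ ?_)
  rw [LinearMap.ker_comp, Submodule.map_equiv_eq_comap_symm]

/-- The augmented complex `⋯ → X 1 → X 0 → M → 0` being exact, with `X i` free of rank `r i` and
`r i = 0` for `i ≥ n`. -/
theorem of_exact (n : ℕ) (X : ℕ → Type) [∀ i, AddCommGroup (X i)] [∀ i, Module R (X i)]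
    (M : Type) [AddCommGroup M] [Module R M] (d : ∀ i, X (i + 1) →ₗ[R] X i) (ε : X 0 →ₗ[R] M)
    (hd : ∀ i, LinearMap.range (d (i + 1)) = LinearMap.ker (d i))
    (hε : LinearMap.range (d 0) = LinearMap.ker ε) (hsurj : Function.Surjective ε)
    (r : ℕ → ℕ) (e : ∀ i, X i ≃ₗ[R] (Fin (r i) →₀ R)) (hr : ∀ i, n ≤ i → r i = 0) :
    HasFreeResEulerChar R n M (∑ i ∈ Finset.range n, (-1) ^ i * (r i : ℤ)) := by
  induction n generalizing X M r with
  | zero =>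
    have : IsEmpty (Fin (r 0)) := by rw [hr 0 le_rfl]; infer_instance
    have : Subsingleton (X 0) := (e 0).injective.subsingleton
    exact ⟨hsurj.subsingleton, by simp⟩
  | succ n ih =>
    have hmem : ∀ x, d 0 x ∈ LinearMap.ker ε := fun x => hε ▸ LinearMap.mem_range_self _ x
    have key := ih (fun i => X (i + 1)) (LinearMap.ker ε) (fun i => d (i + 1))
      ((d 0).codRestrict _ hmem) (fun i => hd (i + 1))
      (by rw [LinearMap.ker_codRestrict]; exact hd 0)
      (by
        rintro ⟨x, hx⟩
        rw [← hε] at hx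
        obtain ⟨y, rfl⟩ := hx
        exact ⟨y, rfl⟩)
      (fun i => r (i + 1)) (fun i => e (i + 1)) (fun i hi => hr (i + 1) (by omega))
    convert of_surjective (e 0) ε hsurj key using 1
    rw [Finset.sum_range_succ', sub_eq_add_neg, ← Finset.sum_neg_distrib, add_comm]
    simp [pow_succ]

end Ring

end HasFreeResEulerChar

/-- Schanuel's lemma. -/
theorem Module.Projective.nonempty_ker_prod_linearEquiv {R : Type} [Ring R]
    {P Q M N : Type} [AddCommGroup P]
    [Module R P] [AddCommGroup Q] [Module R Q] [AddCommGroup M] [Module R M] [AddCommGroup N]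
    [Module R N] [Module.Projective R P] [Module.Projective R Q]
    (p : P →ₗ[R] M) (q : Q →ₗ[R] N) (e : M ≃ₗ[R] N) (hp : Function.Surjective p)
    (hq : Function.Surjective q) :
    Nonempty ((LinearMap.ker p × Q) ≃ₗ[R] (LinearMap.ker q × P)) := by
  obtain ⟨s, hs⟩ := Module.projective_lifting_property q (e.toLinearMap ∘ₗ p) hq
  obtain ⟨t, ht⟩ := Module.projective_lifting_property p (e.symm.toLinearMap ∘ₗ q) hp
  replace hs : ∀ x, q (s x) = e (p x) := fun x => LinearMap.congr_fun hs x
  replace ht : ∀ x, p (t x) = e.symm (q x) := fun x => LinearMap.congr_fun ht x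
  refine ⟨
    { toFun := fun x => (⟨x.2 - s (x.1 + t x.2), by simp [hs, ht]⟩, x.1 + t x.2)
      invFun := fun x => (⟨x.2 - t (x.1 + s x.2), by simp [hs, ht]⟩, x.1 + s x.2)
      map_add' := fun x y => ?_
      map_smul' := fun r x => ?_
      left_inv := fun x => ?_
      right_inv := fun x => ?_ }⟩
  · refine Prod.ext (Subtype.ext ?_) ?_ <;> simp <;> abel
  · refine Prod.ext (Subtype.ext ?_) ?_ <;> simp [smul_sub]
  · refine Prod.ext (Subtype.ext ?_) ?_ <;> simp
  · refine Prod.ext (Subtype.ext ?_) ?_ <;> simp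

/-- Adding a common summand `T` to source and target does not change the kernel. -/
noncomputable def LinearMap.kerProdMapIdEquiv {R : Type} [Ring R] {P M : Type} [AddCommGroup P]
    [Module R P] [AddCommGroup M] [Module R M] (f : P →ₗ[R] M) (T : Type) [AddCommGroup T]
    [Module R T] :
    LinearMap.ker (f.prodMap (LinearMap.id : T →ₗ[R] T)) ≃ₗ[R] LinearMap.ker f :=
  { toFun := fun x => ⟨x.1.1, congrArg Prod.fst x.2⟩
    invFun := fun x => ⟨(x.1, 0), by simp⟩
    map_add' := fun _ _ => rfl
    map_smul' := fun _ _ => rfl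
    left_inv := fun x => Subtype.ext (Prod.ext rfl (congrArg Prod.snd x.2).symm)
    right_inv := fun _ => rfl }

/-- `R ^ a × R ^ b ≃ R ^ (a + b)`. -/
noncomputable def finsuppFinProdEquiv (R : Type) [Ring R] (a b : ℕ) :
    ((Fin a →₀ R) × (Fin b →₀ R)) ≃ₗ[R] (Fin (a + b) →₀ R) :=
  (Finsupp.sumFinsuppLEquivProdFinsupp R).symm ≪≫ₗ Finsupp.domLCongr finSumFinEquiv

/-- `(R ^ b) ^ a ≃ R ^ (a * b)`. -/
noncomputable def finsuppFinFinEquiv (R : Type) [Ring R] (a b : ℕ) :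
    (Fin a →₀ Fin b →₀ R) ≃ₗ[R] (Fin (a * b) →₀ R) :=
  (Finsupp.curryLinearEquiv R).symm ≪≫ₗ Finsupp.domLCongr finProdFinEquiv

namespace HasFreeResEulerChar

/-- Euler characteristics are unique, and indeed determined by the stable class of the module. -/
theorem add_eq_add {R : Type} [Ring R] [InvariantBasisNumber R] {n s t : ℕ} {M N : Type}
    [AddCommGroup M] [Module R M]
    [AddCommGroup N] [Module R N] {k l : ℤ} (hM : HasFreeResEulerChar R n M k)
    (hN : HasFreeResEulerChar R n N l) (e : (M × (Fin s →₀ R)) ≃ₗ[R] (N × (Fin t →₀ R))) :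
    k + s = l + t := by
  induction n generalizing s t M N k l with
  | zero =>
    obtain ⟨_, rfl⟩ := hM
    obtain ⟨_, rfl⟩ := hN
    let := uniqueOfSubsingleton (0 : M)
    let := uniqueOfSubsingleton (0 : N)
    let u : (Fin s →₀ R) ≃ₗ[R] (Fin t →₀ R) :=
      (LinearEquiv.uniqueProd (R := R) (M₂ := M)).symm ≪≫ₗ e ≪≫ₗ LinearEquiv.uniqueProd
    have : s = t := eq_of_fin_equiv R
      ((Finsupp.linearEquivFunOnFinite R R _).symm ≪≫ₗ u ≪≫ₗ
        Finsupp.linearEquivFunOnFinite R R _)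
    simp [this]
  | succ n ih =>
    obtain ⟨a, f, hf, hM⟩ := hM
    obtain ⟨b, g, hg, hN⟩ := hN
    obtain ⟨u⟩ := Module.Projective.nonempty_ker_prod_linearEquiv
      (f.prodMap (LinearMap.id : (Fin s →₀ R) →ₗ[R] _))
      (g.prodMap (LinearMap.id : (Fin t →₀ R) →ₗ[R] _)) e
      (hf.prodMap Function.surjective_id) (hg.prodMap Function.surjective_id)
    have := ih hM hN
      (LinearEquiv.prodCongr (f.kerProdMapIdEquiv _).symm (finsuppFinProdEquiv R b t).symm ≪≫ₗ
        u ≪≫ₗ LinearEquiv.prodCongr (g.kerProdMapIdEquiv _) (finsuppFinProdEquiv R a s))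
    push_cast at this
    linarith

theorem eq_of_linearEquiv {R : Type} [Ring R] [InvariantBasisNumber R] {n m : ℕ} {M N : Type}
    [AddCommGroup M] [Module R M] [AddCommGroup N] [Module R N] {k l : ℤ}
    (hM : HasFreeResEulerChar R n M k) (hN : HasFreeResEulerChar R m N l) (e : M ≃ₗ[R] N) :
    k = l := by
  simpa using add_eq_add (hM.mono (le_max_left n m)) (hN.mono (le_max_right n m))
    (LinearEquiv.prodCongr e (LinearEquiv.refl R (Fin 0 →₀ R)))

theorem of_semilinearMap_bijective {R S : Type} [Ring R] [Ring S] {σ : R →+* S} {n b : ℕ}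
    {F P M N : Type} [AddCommGroup F] [Module R F] [AddCommGroup P] [Module S P]
    [AddCommGroup M] [Module S M] [AddCommGroup N] [Module R N] {k : ℤ}
    (w : F ≃ₗ[R] (Fin b →₀ R)) (Ψ : F →ₛₗ[σ] P) (hΨ : Function.Bijective Ψ)
    (f : P →ₗ[S] M) (hf : Function.Surjective f)
    (e : N →ₛₗ[σ] M) (he : Function.Bijective e)
    (h : ∀ (N' : Type) [AddCommGroup N'] [Module R N'] (u : N' →ₛₗ[σ] LinearMap.ker f),
      Function.Bijective u → HasFreeResEulerChar R n N' k) :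
    HasFreeResEulerChar R (n + 1) N (b - k) := by
  let e' := Equiv.ofBijective e he
  have he' : ∀ x, e (e'.symm x) = x := e'.apply_symm_apply
  let g : F →ₗ[R] N :=
    { toFun := fun x => e'.symm (f (Ψ x))
      map_add' := fun x y => he.injective (by simp [he'])
      map_smul' := fun r x => he.injective (by simp [he']) }
  have hg : ∀ x, e (g x) = f (Ψ x) := fun x => he' _
  let u : LinearMap.ker g →ₛₗ[σ] LinearMap.ker f :=
    { toFun := fun x => ⟨Ψ x, by simp [← hg]⟩
      map_add' := fun x y => by ext1; simp
      map_smul' := fun r x => by ext1; simp }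
  refine of_surjective w g (e'.symm.surjective.comp (hf.comp hΨ.surjective)) (h _ u ?_)
  refine ⟨fun x y hxy => Subtype.ext (hΨ.injective (congrArg Subtype.val hxy)), ?_⟩
  rintro ⟨y, hy⟩
  obtain ⟨x, rfl⟩ := hΨ.surjective y
  refine ⟨⟨x, he.injective ?_⟩, rfl⟩
  rw [hg, map_zero]
  exact hy

/-- Restriction of scalars along `σ : R →+* S`, where `S` is free of rank `d` over `R`. -/
theorem restrictScalars {R S : Type} [Ring R] [Ring S] {σ : R →+* S} {d : ℕ}
    (ψ : (Fin d →₀ R) →ₛₗ[σ] S) (hψ : Function.Bijective ψ) {n : ℕ} {M N : Type}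
    [AddCommGroup M] [Module S M] [AddCommGroup N] [Module R N] {k : ℤ}
    (h : HasFreeResEulerChar S n M k) (e : N →ₛₗ[σ] M) (he : Function.Bijective e) :
    HasFreeResEulerChar R n N (d * k) := by
  induction n generalizing M N k with
  | zero =>
    obtain ⟨_, rfl⟩ := h
    exact ⟨he.injective.subsingleton, by simp⟩
  | succ n ih =>
    obtain ⟨a, f, hf, h⟩ := h
    let Ψ : (Fin (a * d) →₀ R) →ₛₗ[σ] (Fin a →₀ S) :=
      (Finsupp.mapRange.linearMap ψ).comp (finsuppFinFinEquiv R a d).symm.toLinearMap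
    have hmap : Function.Bijective (Finsupp.mapRange ψ (map_zero ψ) : (Fin a →₀ _) → _) :=
      ⟨Finsupp.mapRange_injective ψ (map_zero ψ) hψ.injective,
        Finsupp.mapRange_surjective ψ (map_zero ψ) hψ.surjective⟩
    have hΨ : Function.Bijective Ψ := hmap.comp (finsuppFinFinEquiv R a d).symm.bijective
    convert of_semilinearMap_bijective (LinearEquiv.refl R _) Ψ hΨ f hf e he
      (fun N' _ _ u hu => ih h u hu) using 1
    push_cast
    ring

end HasFreeResEulerChar

/-- The augmentation `ℤ[G] → ℤ`. -/
noncomputable def groupRingAugmentation (G : Type) [Group G] : MonoidAlgebra ℤ G →+* ℤ :=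
  (MonoidAlgebra.lift ℤ ℤ G 1).toRingHom

theorem groupRingAugmentation_single {G : Type} [Group G] (g : G) (n : ℤ) :
    groupRingAugmentation G (MonoidAlgebra.single g n) = n := by
  simp [groupRingAugmentation]

theorem groupRingAugmentation_mapDomain {L K : Type} [Group L] [Group K] (φ : L →* K)
    (r : MonoidAlgebra ℤ L) :
    groupRingAugmentation K (MonoidAlgebra.mapDomainRingHom ℤ φ r) =
      groupRingAugmentation L r := by
  suffices (groupRingAugmentation K).comp (MonoidAlgebra.mapDomainRingHom ℤ φ) =
    groupRingAugmentation L from RingHom.congr_fun this r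
  apply RingHom.coe_addMonoidHom_injective
  refine MonoidAlgebra.addMonoidHom_ext fun g n => ?_
  simp [groupRingAugmentation_single]

instance invariantBasisNumber_monoidAlgebra_int (G : Type) [Group G] :
    InvariantBasisNumber (MonoidAlgebra ℤ G) :=
  invariantBasisNumber_iff_matrix.2 fun n m A B hAB hBA =>
    invariantBasisNumber_iff_matrix.1 inferInstance n m
      (A.map (groupRingAugmentation G)) (B.map (groupRingAugmentation G))
      (by rw [← Matrix.map_mul, hAB, Matrix.map_one _ (map_zero _) (map_one _)])
      (by rw [← Matrix.map_mul, hBA, Matrix.map_one _ (map_zero _) (map_one _)])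

/-- The underlying abelian group of `trivialZMod G` is `ℤ`. -/
noncomputable def trivialZModEquiv (G : Type) [Group G] : trivialZMod G ≃+ ℤ :=
  (Representation.trivial ℤ G ℤ).asModuleEquiv.toAddEquiv

theorem trivialZModEquiv_smul {G : Type} [Group G] (r : MonoidAlgebra ℤ G) (x : trivialZMod G) :
    trivialZModEquiv G (r • x) = groupRingAugmentation G r * trivialZModEquiv G x := by
  refine ((Representation.trivial ℤ G ℤ).asModuleEquiv_map_smul r x).trans ?_
  change _ = groupRingAugmentation G r * (Representation.trivial ℤ G ℤ).asModuleEquiv x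
  generalize (Representation.trivial ℤ G ℤ).asModuleEquiv x = y
  induction r using MonoidAlgebra.induction_linear with
  | zero => simp
  | add r s hr hs => simp [hr, hs, add_mul]
  | single g n => simp [groupRingAugmentation_single, Representation.asAlgebraHom_single]

/-- A homomorphism of groups induces a semilinear bijection of trivial modules. -/
noncomputable def trivialZModMap {L K : Type} [Group L] [Group K] (φ : L →* K) :
    trivialZMod L →ₛₗ[MonoidAlgebra.mapDomainRingHom ℤ φ] trivialZMod K where
  toFun x := (trivialZModEquiv K).symm (trivialZModEquiv L x)
  map_add' x y := by simp
  map_smul' r x := by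
    apply (trivialZModEquiv K).injective
    rw [AddEquiv.apply_symm_apply, trivialZModEquiv_smul, trivialZModEquiv_smul,
      groupRingAugmentation_mapDomain, AddEquiv.apply_symm_apply]

theorem trivialZModMap_bijective {L K : Type} [Group L] [Group K] (φ : L →* K) :
    Function.Bijective (trivialZModMap φ) :=
  ((trivialZModEquiv L).trans (trivialZModEquiv K).symm).bijective

/-- For `φ : L → K` injective with image of finite index `d`, `ℤ[K]` is free of rank `d` as a left
`ℤ[L]`-module. -/
theorem exists_bijective_monoidAlgebra_of_injective {L K : Type} [Group L] [Group K] (φ : L →* K)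
    (hφ : Function.Injective φ) (hidx : φ.range.index ≠ 0) :
    ∃ ψ : (Fin φ.range.index →₀ MonoidAlgebra ℤ L)
        →ₛₗ[MonoidAlgebra.mapDomainRingHom ℤ φ] MonoidAlgebra ℤ K,
      Function.Bijective ψ := by
  obtain ⟨T, hT, -⟩ := φ.range.exists_isComplement_right 1
  have hcard := hT.card_right
  have : Finite T := Nat.finite_of_card_ne_zero (hcard ▸ hidx)
  let τ : T ≃ Fin φ.range.index := Finite.equivFinOfCardEq hcard
  let κ : Fin φ.range.index × L ≃ K :=
    (Equiv.prodComm _ _).trans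
      (((MonoidHom.ofInjective hφ).toEquiv.prodCongr τ.symm).trans hT.equiv.symm)
  have hκ : ∀ i l, κ (i, l) = φ l * τ.symm i := fun i l => rfl
  let E : (Fin φ.range.index →₀ MonoidAlgebra ℤ L) ≃+ MonoidAlgebra ℤ K :=
    (Finsupp.mapRange.addEquiv MonoidAlgebra.coeffAddEquiv).trans <|
      (Finsupp.curryLinearEquiv ℤ).symm.toAddEquiv.trans <|
        (Finsupp.domLCongr (M := ℤ) (R := ℤ) κ).toAddEquiv.trans
          MonoidAlgebra.coeffAddEquiv.symm
  have hE : ∀ i l n, E (Finsupp.single i (MonoidAlgebra.single l n)) =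
      MonoidAlgebra.single (φ l * τ.symm i) n := fun i l n => by
    simp [E, Finsupp.mapRange_single, ← hκ]
  refine ⟨{ toFun := E, map_add' := map_add E, map_smul' := fun r x => ?_ }, E.bijective⟩
  induction r using MonoidAlgebra.induction_linear with
  | zero => simp
  | add r s hr hs => rw [add_smul, map_add, hr, hs, map_add, add_smul]
  | single g m =>
    induction x using Finsupp.induction_linear with
    | zero => simp
    | add x y hx hy => rw [smul_add, map_add, hx, hy, map_add, smul_add]
    | single i y =>
      induction y using MonoidAlgebra.induction_linear with
      | zero => simp
      | add x y hx hy =>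
        rw [Finsupp.single_add, smul_add, map_add, hx, hy, map_add, smul_add]
      | single l n =>
        simp [hE, MonoidAlgebra.single_mul_single, mul_assoc]

theorem HasFreeResOfRanks.hasFreeResEulerChar {G : Type} [Group G] {n : ℕ} {r : ℕ → ℕ}
    (h : HasFreeResOfRanks G n r) :
    HasFreeResEulerChar (MonoidAlgebra ℤ G) (n + 1) (trivialZMod G)
      (∑ i ∈ Finset.range (n + 1), (-1) ^ i * (r i : ℤ)) := by
  obtain ⟨P, hP, hr⟩ := h
  refine HasFreeResEulerChar.of_exact (n + 1) (fun i => P.complex.X i) (trivialZMod G)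
    (fun i => (P.complex.d (i + 1) i).hom) (P.π.f 0).hom
    (fun i => (P.exact_succ i).moduleCat_range_eq_ker) P.exact₀.moduleCat_range_eq_ker ?_ r
    (fun i => (hP i).some) (fun i hi => hr i (by omega))
  exact (ModuleCat.epi_iff_surjective (P.π.f 0)).1 inferInstance

theorem HasFreeResEulerChar.comap {L K : Type} [Group L] [Group K] (φ : L →* K)
    (hφ : Function.Injective φ) (hidx : φ.range.index ≠ 0) {n : ℕ} {k : ℤ}
    (h : HasFreeResEulerChar (MonoidAlgebra ℤ K) n (trivialZMod K) k) :
    HasFreeResEulerChar (MonoidAlgebra ℤ L) n (trivialZMod L) (φ.range.index * k) := by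
  obtain ⟨ψ, hψ⟩ := exists_bijective_monoidAlgebra_of_injective φ hφ hidx
  exact h.restrictScalars ψ hψ (trivialZModMap φ) (trivialZModMap_bijective φ)

/-- If `H ≤ G` are groups of type `VFP` with `H` of finite index in `G`, and both have
Euler characteristics `a` and `b` respectively, then `χ(H) = [G : H] · χ(G)`. -/
theorem eulerChar_finiteIndex (G : Type) [Group G] (H : Subgroup G)
    (hidx : H.index ≠ 0) (hG : TypeVFP G) (hH : TypeVFP H)
    (a b : ℚ) (ha : EulerCharRel H a) (hb : EulerCharRel G b) :
    a = (H.index : ℚ) * b := by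
  obtain ⟨K₁, n₁, r₁, hK₁, h₁, rfl⟩ := ha
  obtain ⟨K₂, n₂, r₂, hK₂, h₂, rfl⟩ := hb
  have : K₂.FiniteIndex := ⟨hK₂⟩
  let L : Subgroup K₁ := (K₂.subgroupOf H).subgroupOf K₁
  have hL : L.index ≠ 0 := Subgroup.FiniteIndex.index_ne_zero
  let φ : L →* K₂ := (H.subtype.comp (K₁.subtype.comp L.subtype)).codRestrict K₂ fun l => l.2
  have hφ : Function.Injective φ := fun x y hxy =>
    Subtype.ext (Subtype.ext (Subtype.ext (congrArg (fun z : K₂ => (z : G)) hxy)))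
  have hindex : φ.range.index * K₂.index = L.index * K₁.index * H.index := by
    simp only [← Subgroup.index_map_subtype]
    congr 1
    nth_rewrite 3 [← L.range_subtype]
    simp only [MonoidHom.map_range]
    rfl
  have hφidx : φ.range.index ≠ 0 := fun h => by
    rw [h, zero_mul] at hindex
    exact mul_ne_zero (mul_ne_zero hL hK₁) hidx hindex.symm
  have key := (h₁.hasFreeResEulerChar.comap L.subtype L.subtype_injective
    (by rwa [L.range_subtype])).eq_of_linearEquiv
    (h₂.hasFreeResEulerChar.comap φ hφ hφidx) (LinearEquiv.refl _ _)
  rw [L.range_subtype] at key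
  have key' := congrArg (Int.cast : ℤ → ℚ) key
  have hindex' := congrArg (Nat.cast : ℕ → ℚ) hindex
  push_cast at key' hindex'
  have e₁ : (K₁.index : ℚ) ≠ 0 := by exact_mod_cast hK₁
  have e₂ : (K₂.index : ℚ) ≠ 0 := by exact_mod_cast hK₂
  have e₃ : (φ.range.index : ℚ) ≠ 0 := by exact_mod_cast hφidx
  have e₄ : (L.index : ℚ) ≠ 0 := by exact_mod_cast hL
  generalize (∑ i ∈ Finset.range (n₁ + 1), (-1 : ℚ) ^ i * r₁ i) = x at *
  generalize (∑ i ∈ Finset.range (n₂ + 1), (-1 : ℚ) ^ i * r₂ i) = y at *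
  rw [← mul_div_assoc, div_eq_div_iff e₁ e₂]
  apply mul_left_cancel₀ e₄
  linear_combination K₂.index * key' + y * hindex'
end

section
/- Let G = A *_C B be an amalgamated free product of groups of type VFP with C of type VFP, and suppose G is of type VFP. Then χ(G) = χ(A) + χ(B) − χ(C). -/
open CategoryTheory

/-- `G`, together with `iA`, `iB`, is the amalgamated free product `A *_C B` along the
injections `f : C → A` and `g : C → B` (i.e. the pushout of groups). -/
def IsAmalgamatedProduct {C A B G : Type} [Group C] [Group A] [Group B] [Group G]
    (f : C →* A) (g : C →* B) (iA : A →* G) (iB : B →* G) : Prop :=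
  iA.comp f = iB.comp g ∧
  ∀ (K : Type) (_ : Group K) (kA : A →* K) (kB : B →* K),
    kA.comp f = kB.comp g → ∃! k : G →* K, k.comp iA = kA ∧ k.comp iB = kB

section EulerTheory

variable {R : Type} [Ring R]

/-- `P` is a finitely generated projective module whose Hattori-Stallings rank, evaluated under
the trace functional `τ`, is `q`; the data is a finite dual basis of `P`. -/
def HasTraceRank (τ : R →+ ℚ) (P : Type) [AddCommGroup P] [Module R P] (q : ℚ) : Prop :=
  ∃ (ι : Type) (_ : Fintype ι) (x : ι → P) (f : ι → P →ₗ[R] R),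
    (∀ v, ∑ i, f i v • x i = v) ∧ q = ∑ i, τ (f i (x i))

/-- `M` has a projective resolution of length `≤ n` by finitely generated projective modules, and
`q` is the alternating sum of the ranks of its terms. -/
def HasEulerChar (τ : R →+ ℚ) :
    ℕ → ∀ (M : Type) [AddCommGroup M] [Module R M], ℚ → Prop
  | 0, M, _, _, q => HasTraceRank τ M q
  | n + 1, M, _, _, q => ∃ (P : Type) (_ : AddCommGroup P) (_ : Module R P) (p : P →ₗ[R] M)
      (r s : ℚ), Function.Surjective p ∧ HasTraceRank τ P r ∧
        HasEulerChar τ n (LinearMap.ker p) s ∧ q = r - s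

variable {τ : R →+ ℚ}
variable {M N P Q X : Type} [AddCommGroup M] [Module R M] [AddCommGroup N] [Module R N]
  [AddCommGroup P] [Module R P] [AddCommGroup Q] [Module R Q] [AddCommGroup X] [Module R X]

namespace HasTraceRank

theorem unique (hτ : ∀ x y, τ (x * y) = τ (y * x)) {q q' : ℚ} (h : HasTraceRank τ P q)
    (h' : HasTraceRank τ P q') : q = q' := by
  obtain ⟨ι, _, x, f, hf, rfl⟩ := h
  obtain ⟨κ, _, y, g, hg, rfl⟩ := h'
  have h1 : ∀ i, τ (f i (x i)) = ∑ j, τ (g j (x i) * f i (y j)) := fun i => by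
    conv_lhs => rw [← hg (x i)]
    rw [map_sum, map_sum]
    refine Finset.sum_congr rfl fun j _ => ?_
    rw [map_smul, smul_eq_mul]
  have h2 : ∀ j, τ (g j (y j)) = ∑ i, τ (f i (y j) * g j (x i)) := fun j => by
    conv_lhs => rw [← hf (y j)]
    rw [map_sum, map_sum]
    refine Finset.sum_congr rfl fun i _ => ?_
    rw [map_smul, smul_eq_mul]
  simp_rw [h1, h2]
  rw [Finset.sum_comm]
  exact Finset.sum_congr rfl fun j _ => Finset.sum_congr rfl fun i _ => hτ _ _

theorem of_linearEquiv {q : ℚ} (h : HasTraceRank τ P q) (e : P ≃ₗ[R] Q) :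
    HasTraceRank τ Q q := by
  obtain ⟨ι, _, x, f, hf, rfl⟩ := h
  refine ⟨ι, ‹_›, fun i => e (x i), fun i => f i ∘ₗ e.symm.toLinearMap, fun v => ?_, by simp⟩
  have := congrArg e (hf (e.symm v))
  simpa using this

theorem prod {q q' : ℚ} (h : HasTraceRank τ P q) (h' : HasTraceRank τ Q q') :
    HasTraceRank τ (P × Q) (q + q') := by
  obtain ⟨ι, _, x, f, hf, rfl⟩ := h
  obtain ⟨κ, _, y, g, hg, rfl⟩ := h'
  refine ⟨ι ⊕ κ, inferInstance, Sum.elim (fun i => (x i, 0)) (fun j => (0, y j)),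
    Sum.elim (fun i => f i ∘ₗ LinearMap.fst R P Q) (fun j => g j ∘ₗ LinearMap.snd R P Q),
    fun v => ?_, by simp⟩
  ext
  · simp [Fintype.sum_sum_type, Prod.fst_sum, hf]
  · simp [Fintype.sum_sum_type, Prod.snd_sum, hg]

theorem of_subsingleton [Subsingleton P] : HasTraceRank τ P 0 :=
  ⟨Empty, inferInstance, Empty.elim, fun _ => 0, fun _ => Subsingleton.elim _ _, by simp⟩

theorem free (h1 : τ 1 = 1) (n : ℕ) : HasTraceRank τ (Fin n →₀ R) n := by
  refine ⟨Fin n, inferInstance, fun i => Finsupp.single i 1, fun i => Finsupp.lapply i,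
    fun v => ?_, by simp [h1]⟩
  ext j
  simp

theorem exists_lift {q : ℚ} (h : HasTraceRank τ P q) (p : M →ₗ[R] N)
    (hp : Function.Surjective p) (f : P →ₗ[R] N) : ∃ g : P →ₗ[R] M, p ∘ₗ g = f := by
  obtain ⟨ι, _, x, c, hc, rfl⟩ := h
  choose y hy using fun i => hp (f (x i))
  refine ⟨∑ i, (c i).smulRight (y i), LinearMap.ext fun v => ?_⟩
  conv_rhs => rw [← hc v]
  simp [hy]

theorem exists_of_retract {q : ℚ} (h : HasTraceRank τ P q) (i : M →ₗ[R] P) (p : P →ₗ[R] M)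
    (hpi : ∀ m, p (i m) = m) : ∃ q', HasTraceRank τ M q' := by
  obtain ⟨ι, _, x, c, hc, rfl⟩ := h
  refine ⟨_, ι, ‹_›, fun j => p (x j), fun j => c j ∘ₗ i, fun v => ?_, rfl⟩
  have := congrArg p (hc (i v))
  simpa [hpi] using this

end HasTraceRank

/-- Schanuel's lemma. -/
theorem nonempty_schanuelEquiv {q q' : ℚ} (hP : HasTraceRank τ P q) (hQ : HasTraceRank τ Q q')
    (p : P →ₗ[R] M) (p' : Q →ₗ[R] M) (hp : Function.Surjective p) (hp' : Function.Surjective p') :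
    Nonempty ((LinearMap.ker p × Q) ≃ₗ[R] (LinearMap.ker p' × P)) := by
  obtain ⟨a, ha⟩ := hP.exists_lift p' hp' p
  obtain ⟨b, hb⟩ := hQ.exists_lift p hp p'
  have ha' : ∀ u, p' (a u) = p u := fun u => LinearMap.congr_fun ha u
  have hb' : ∀ u, p (b u) = p' u := fun u => LinearMap.congr_fun hb u
  let u : (LinearMap.ker p × Q) →ₗ[R] P :=
    (LinearMap.ker p).subtype ∘ₗ LinearMap.fst R _ _ + b ∘ₗ LinearMap.snd R _ _
  let v : (LinearMap.ker p' × P) →ₗ[R] Q :=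
    (LinearMap.ker p').subtype ∘ₗ LinearMap.fst R _ _ + a ∘ₗ LinearMap.snd R _ _
  let F : (LinearMap.ker p × Q) →ₗ[R] (LinearMap.ker p' × P) :=
    LinearMap.prod (LinearMap.codRestrict _ (LinearMap.snd R _ _ - a ∘ₗ u) (by
      rintro ⟨⟨x, hx⟩, w⟩
      have hx' : p x = 0 := hx
      simp [u, ha', hb', hx'])) u
  let G : (LinearMap.ker p' × P) →ₗ[R] (LinearMap.ker p × Q) :=
    LinearMap.prod (LinearMap.codRestrict _ (LinearMap.snd R _ _ - b ∘ₗ v) (by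
      rintro ⟨⟨x, hx⟩, w⟩
      have hx' : p' x = 0 := hx
      simp [v, ha', hb', hx'])) v
  refine ⟨LinearEquiv.ofLinearMap F G ?_ ?_⟩
  · refine LinearMap.ext fun ⟨⟨x, hx⟩, w⟩ => ?_
    ext <;> simp [F, G, u, v]
  · refine LinearMap.ext fun ⟨⟨x, hx⟩, w⟩ => ?_
    ext <;> simp [F, G, u, v]

namespace HasEulerChar

theorem of_linearEquiv {n : ℕ} {q : ℚ} (h : HasEulerChar τ n M q) (e : M ≃ₗ[R] N) :
    HasEulerChar τ n N q := by
  cases n with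
  | zero => exact HasTraceRank.of_linearEquiv h e
  | succ n =>
    obtain ⟨P, _, _, p, r, s, hp, hP, hk, rfl⟩ := h
    refine ⟨P, _, _, e.toLinearMap ∘ₗ p, r, s, e.surjective.comp hp, hP, ?_, rfl⟩
    rwa [LinearEquiv.ker_comp]

/-- Extending a resolution of `N` by a short exact sequence `0 → N → P → M → 0`. -/
theorem of_exact {n : ℕ} {r s : ℚ} (hN : HasEulerChar τ n N s) (hP : HasTraceRank τ P r)
    (i : N →ₗ[R] P) (p : P →ₗ[R] M) (hi : Function.Injective i) (hip : Function.Exact i p)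
    (hp : Function.Surjective p) : HasEulerChar τ (n + 1) M (r - s) := by
  refine ⟨P, _, _, p, r, s, hp, hP, hN.of_linearEquiv ?_, rfl⟩
  exact (LinearEquiv.ofInjective i hi).trans
    (LinearEquiv.ofEq _ _ (LinearMap.exact_iff.mp hip).symm)

theorem succ {n : ℕ} {q : ℚ} (h : HasEulerChar τ n M q) : HasEulerChar τ (n + 1) M q := by
  induction n generalizing M q with
  | zero =>
    refine ⟨M, _, _, LinearMap.id, q, 0, Function.surjective_id, h, ?_, by simp⟩
    have : Subsingleton (LinearMap.ker (LinearMap.id : M →ₗ[R] M)) := by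
      rw [LinearMap.ker_id]; infer_instance
    exact HasTraceRank.of_subsingleton
  | succ n ih =>
    obtain ⟨P, _, _, p, r, s, hp, hP, hk, rfl⟩ := h
    exact ⟨P, _, _, p, r, s, hp, hP, ih hk, rfl⟩

theorem mono {n m : ℕ} (hnm : n ≤ m) {q : ℚ} (h : HasEulerChar τ n M q) :
    HasEulerChar τ m M q := by
  induction hnm with
  | refl => exact h
  | step _ ih => exact ih.succ

/-- The horseshoe lemma: additivity on short exact sequences. -/
theorem extension {n : ℕ} {q q' : ℚ} (hN : HasEulerChar τ n N q) (hM : HasEulerChar τ n M q')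
    (i : N →ₗ[R] X) (p : X →ₗ[R] M) (hi : Function.Injective i) (hip : Function.Exact i p)
    (hp : Function.Surjective p) : HasEulerChar τ n X (q + q') := by
  induction n generalizing N M X q q' with
  | zero =>
    obtain ⟨s, hs⟩ := HasTraceRank.exists_lift hM p hp LinearMap.id
    have hs' : ∀ m, p (s m) = m := fun m => LinearMap.congr_fun hs m
    refine (HasTraceRank.prod hN hM).of_linearEquiv
      (LinearEquiv.ofBijective (i.coprod s) ⟨?_, fun x => ?_⟩)
    · rw [injective_iff_map_eq_zero]
      rintro ⟨a, b⟩ hab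
      have hb : b = 0 := by
        have := congrArg p hab
        simpa [hs', hip.apply_apply_eq_zero] using this
      subst hb
      have : i a = i 0 := by simpa using hab
      simp [hi this]
    · obtain ⟨a, ha⟩ := (hip (x - s (p x))).mp (by simp [hs'])
      exact ⟨(a, p x), by simp [ha]⟩
  | succ n ih =>
    obtain ⟨P, _, _, π, r, s, hπ, hP, hk, rfl⟩ := hN
    obtain ⟨P', _, _, π', r', s', hπ', hP', hk', rfl⟩ := hM
    obtain ⟨σ, hσ⟩ := hP'.exists_lift p hp π'
    have hσ' : ∀ m, p (σ m) = π' m := fun m => LinearMap.congr_fun hσ m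
    let Φ : (P × P') →ₗ[R] X := (i ∘ₗ π).coprod σ
    have hΦ : ∀ u v, Φ (u, v) = i (π u) + σ v := fun u v => by simp [Φ]
    have hpΦ : ∀ w, p (Φ w) = π' w.2 := fun w => by
      simp [Φ, hσ', hip.apply_apply_eq_zero]
    have hsurj : Function.Surjective Φ := fun x => by
      obtain ⟨v, hv⟩ := hπ' (p x)
      obtain ⟨a, ha⟩ := (hip (x - σ v)).mp (by simp [hσ', hv])
      obtain ⟨u, rfl⟩ := hπ a
      exact ⟨(u, v), by simp [hΦ, ha]⟩
    have hker : HasEulerChar τ n (LinearMap.ker Φ) (s + s') := by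
      refine ih hk hk'
        (LinearMap.codRestrict _ (LinearMap.inl R P P' ∘ₗ (LinearMap.ker π).subtype) ?_)
        (LinearMap.codRestrict _ (LinearMap.snd R P P' ∘ₗ (LinearMap.ker Φ).subtype) ?_) ?_ ?_ ?_
      · rintro ⟨u, hu⟩
        have hu' : π u = 0 := hu
        simp [hΦ, hu']
      · rintro ⟨w, hw⟩
        have hw' : Φ w = 0 := hw
        simp [← hpΦ, hw']
      · rintro ⟨u, hu⟩ ⟨v, hv⟩ h
        simpa [Subtype.ext_iff] using h
      · rintro ⟨⟨u, v⟩, hw⟩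
        have hw' : i (π u) + σ v = 0 := by rw [← hΦ]; exact hw
        constructor
        · intro h
          have hv : v = 0 := by simpa [Subtype.ext_iff] using h
          subst hv
          have hu : π u = 0 := hi (by simpa using hw')
          exact ⟨⟨u, hu⟩, by simp [Subtype.ext_iff]⟩
        · rintro ⟨⟨u', hu'⟩, h⟩
          simp only [Subtype.ext_iff, LinearMap.codRestrict_apply, LinearMap.comp_apply,
            Submodule.subtype_apply, LinearMap.inl_apply, Prod.mk.injEq] at h
          simp [Subtype.ext_iff, ← h.2]
      · rintro ⟨v, hv⟩
        have hv' : π' v = 0 := hv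
        obtain ⟨a, ha⟩ := (hip (σ v)).mp (by simp [hσ', hv'])
        obtain ⟨u, rfl⟩ := hπ a
        exact ⟨⟨(-u, v), by simp [hΦ, ha]⟩, by simp [Subtype.ext_iff]⟩
    exact ⟨P × P', _, _, Φ, r + r', s + s', hsurj, hP.prod hP', hker, by ring⟩

theorem prod {n : ℕ} {q q' : ℚ} (hM : HasEulerChar τ n M q) (hN : HasEulerChar τ n N q') :
    HasEulerChar τ n (M × N) (q + q') :=
  hM.extension hN (LinearMap.inl R M N) (LinearMap.snd R M N) LinearMap.inl_injective
    Function.Exact.inl_snd LinearMap.snd_surjective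

theorem of_hasTraceRank {q : ℚ} (h : HasTraceRank τ M q) (n : ℕ) : HasEulerChar τ n M q :=
  mono (n := 0) (Nat.zero_le n) h

theorem unique (hτ : ∀ x y, τ (x * y) = τ (y * x)) {n m : ℕ} {q q' : ℚ}
    (h : HasEulerChar τ n M q) (h' : HasEulerChar τ m M q') : q = q' := by
  wlog hnm : n = m generalizing n m
  · exact this (h.mono (le_max_left n m)) (h'.mono (le_max_right n m)) rfl
  subst hnm
  induction n generalizing M q q' with
  | zero => exact HasTraceRank.unique hτ h h'
  | succ n ih =>
    obtain ⟨P, _, _, p, r, s, hp, hP, hk, rfl⟩ := h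
    obtain ⟨P', _, _, p', r', s', hp', hP', hk', rfl⟩ := h'
    obtain ⟨e⟩ := nonempty_schanuelEquiv hP hP' p p' hp hp'
    have := ih ((hk.prod (of_hasTraceRank hP' n)).of_linearEquiv e)
      (hk'.prod (of_hasTraceRank hP n))
    linarith

theorem exists_of_retract {n : ℕ} {q : ℚ} (h : HasEulerChar τ n X q) (i : M →ₗ[R] X)
    (p : X →ₗ[R] M) (hpi : ∀ m, p (i m) = m) : ∃ q', HasEulerChar τ n M q' := by
  induction n generalizing M X q with
  | zero => exact HasTraceRank.exists_of_retract h i p hpi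
  | succ n ih =>
    obtain ⟨P, _, _, π, r, s, hπ, hP, hk, rfl⟩ := h
    let ψ : (P × P) →ₗ[R] X := (i ∘ₗ p ∘ₗ π).coprod (π - i ∘ₗ p ∘ₗ π)
    have hψ : ∀ u v, ψ (u, v) = i (p (π u)) + (π v - i (p (π v))) := fun u v => by simp [ψ]
    have hsurj : Function.Surjective ψ := fun x => by
      obtain ⟨u, rfl⟩ := hπ x
      exact ⟨(u, u), by simp [hψ]⟩
    obtain ⟨e⟩ := nonempty_schanuelEquiv hP (hP.prod hP) π ψ hπ hsurj
    have hE := (hk.prod (of_hasTraceRank (hP.prod hP) n)).of_linearEquiv e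
    have hret : ∃ q', HasEulerChar τ n (LinearMap.ker (p ∘ₗ π)) q' := by
      refine ih hE
        (LinearMap.inl R _ _ ∘ₗ
          LinearMap.codRestrict _ (LinearMap.inl R P P ∘ₗ (LinearMap.ker (p ∘ₗ π)).subtype) ?_)
        (LinearMap.codRestrict _ (LinearMap.fst R P P ∘ₗ (LinearMap.ker ψ).subtype) ?_ ∘ₗ
          LinearMap.fst R _ _) ?_
      · rintro ⟨u, hu⟩
        have hu' : p (π u) = 0 := hu
        simp [hψ, hu']
      · rintro ⟨⟨u, v⟩, hw⟩
        have hw' : i (p (π u)) + (π v - i (p (π v))) = 0 := by rw [← hψ]; exact hw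
        have := congrArg p hw'
        simpa [hpi] using this
      · rintro ⟨u, hu⟩
        simp [Subtype.ext_iff]
    obtain ⟨q', hq'⟩ := hret
    refine ⟨r - q', P, _, _, p ∘ₗ π, r, q', fun m => ?_, hP, hq', rfl⟩
    obtain ⟨u, hu⟩ := hπ (i m)
    exact ⟨u, by simp [hu, hpi]⟩

/-- The Euler characteristic of a module resolved by a finite complex. -/
theorem of_complex (n : ℕ) (Y : ℕ → Type) [∀ k, AddCommGroup (Y k)] [∀ k, Module R (Y k)]
    (d : ∀ k, Y (k + 1) →ₗ[R] Y k) (ε : Y 0 →ₗ[R] M) (hε : Function.Surjective ε)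
    (h0 : Function.Exact (d 0) ε) (hd : ∀ k, Function.Exact (d (k + 1)) (d k)) (r : ℕ → ℕ)
    (hr : ∀ k, HasTraceRank τ (Y k) (r k)) (hn : ∀ k, n < k → Subsingleton (Y k)) :
    HasEulerChar τ n M (∑ k ∈ Finset.range (n + 1), (-1 : ℚ) ^ k * r k) := by
  induction n generalizing M Y r with
  | zero =>
    have := hn 1 Nat.one_pos
    have hinj : Function.Injective ε := by
      rw [injective_iff_map_eq_zero]
      intro x hx
      obtain ⟨y, rfl⟩ := (h0 x).mp hx
      rw [Subsingleton.elim y 0, map_zero]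
    have := HasTraceRank.of_linearEquiv (hr 0) (LinearEquiv.ofBijective ε ⟨hinj, hε⟩)
    simpa [HasEulerChar] using this
  | succ n ih =>
    have hN := ih (M := LinearMap.ker ε) (fun k => Y (k + 1)) (fun k => d (k + 1))
      (LinearMap.codRestrict _ (d 0) fun y => h0.apply_apply_eq_zero y)
      (fun ⟨y, hy⟩ => by
        obtain ⟨z, rfl⟩ := (h0 y).mp hy
        exact ⟨z, rfl⟩)
      (fun y => by
        rw [← hd 0 y]
        exact Subtype.ext_iff)
      (fun k => hd (k + 1)) (fun k => r (k + 1)) (fun k => hr (k + 1))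
      (fun k hk => hn (k + 1) (by omega))
    refine ⟨Y 0, _, _, ε, _, _, hε, hr 0, hN, ?_⟩
    rw [Finset.sum_range_succ']
    simp only [pow_succ, mul_neg, mul_one, neg_mul, Finset.sum_neg_distrib]
    simp
    ring

end HasEulerChar

end EulerTheory

section GroupAlgebra

open MonoidAlgebra

variable {k : Type} [CommRing k] {G H : Type} [Group G] [Group H]

/-- Kaplansky's trace on a group algebra: the coefficient of the identity, mapped into `ℚ`. -/
noncomputable def kaplanskyTrace (c : k →+* ℚ) (G : Type) [Group G] : MonoidAlgebra k G →+ ℚ where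
  toFun x := c (x.coeff 1)
  map_zero' := by simp
  map_add' := by simp

theorem kaplanskyTrace_single (c : k →+* ℚ) (g : G) (a : k) [Decidable (g = 1)] :
    kaplanskyTrace c G (single g a) = if g = 1 then c a else 0 := by
  classical
  simp only [kaplanskyTrace, AddMonoidHom.coe_mk, ZeroHom.coe_mk, coeff_single,
    Finsupp.single_apply]
  split_ifs <;> simp

theorem kaplanskyTrace_mul_comm (c : k →+* ℚ) (x y : MonoidAlgebra k G) :
    kaplanskyTrace c G (x * y) = kaplanskyTrace c G (y * x) := by
  classical
  induction x using MonoidAlgebra.induction_linear with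
  | zero => simp
  | add x x' hx hx' => simp [add_mul, mul_add, hx, hx']
  | single g a =>
    induction y using MonoidAlgebra.induction_linear with
    | zero => simp
    | add x x' hx hx' => simp [add_mul, mul_add, hx, hx']
    | single h b =>
      have : g * h = 1 ↔ h * g = 1 := mul_eq_one_comm
      rw [single_mul_single, single_mul_single, kaplanskyTrace_single, kaplanskyTrace_single,
        mul_comm a b]
      simp only [this]

theorem kaplanskyTrace_one (c : k →+* ℚ) : kaplanskyTrace c G 1 = 1 := by
  classical
  rw [one_def, kaplanskyTrace_single]
  simp

theorem kaplanskyTrace_mapDomain (c : k →+* ℚ) (j : H →* G) (hj : Function.Injective j)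
    (x : MonoidAlgebra k H) :
    kaplanskyTrace c G (mapDomainRingHom k j x) = kaplanskyTrace c H x := by
  classical
  induction x using MonoidAlgebra.induction_linear with
  | zero => simp
  | add x x' hx hx' => simp only [map_add, hx, hx']
  | single g a =>
    simp [kaplanskyTrace_single, mapDomainRingHom_apply, mapDomain_single, map_eq_one_iff j hj]

/-- An additive map commuting with the action of the monomials is linear over the group algebra. -/
def linearMapOfSingle {M N : Type} [AddCommGroup M] [AddCommGroup N] [Module (MonoidAlgebra k G) M]
    [Module (MonoidAlgebra k G) N] (f : M →+ N)
    (hf : ∀ (g : G) (a : k) (m : M), f (single g a • m) = single g a • f m) :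
    M →ₗ[MonoidAlgebra k G] N where
  toFun := f
  map_add' := f.map_add
  map_smul' r m := by
    induction r using MonoidAlgebra.induction_linear with
    | zero => simp
    | add x y hx hy =>
      simp only [RingHom.id_apply] at hx hy ⊢
      simp only [add_smul, map_add, hx, hy]
    | single g a => exact hf g a m

/-- The trivial `kG`-module `k`. -/
def TrivialModule (k G : Type) [CommRing k] [Group G] : Type := k

instance : CommRing (TrivialModule k G) := inferInstanceAs (CommRing k)

noncomputable instance : Module (MonoidAlgebra k G) (TrivialModule k G) :=
  Module.compHom k (liftNCRingHom (RingHom.id k) (1 : G →* k) fun _ _ => Commute.all _ _)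

theorem TrivialModule.single_smul (g : G) (a : k) (m : TrivialModule k G) :
    (single g a : MonoidAlgebra k G) • m =
      ((show TrivialModule k G from a) * m : TrivialModule k G) := by
  have : liftNCRingHom (RingHom.id k) (1 : G →* k) (fun _ _ => Commute.all _ _) (single g a) = a := by
    simp
  exact congrArg (· * (show k from m)) this

section Induction

variable (j : H →* G) (hj : Function.Injective j)

theorem exists_cocycle (g : G) (c : G ⧸ j.range) :
    ∃ h : H, j h = (g • c).out⁻¹ * g * c.out := by
  have : ((g • c).out⁻¹ * (g * c.out)) ∈ j.range := by
    rw [← QuotientGroup.eq, QuotientGroup.out_eq']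
    change _ = g • (QuotientGroup.mk c.out)
    rw [QuotientGroup.out_eq']
  obtain ⟨h, hh⟩ := this
  exact ⟨h, by rw [hh, mul_assoc]⟩

/-- The `H`-valued cocycle describing the action of `G` on a set of coset representatives. -/
noncomputable def cosetCocycle (g : G) (c : G ⧸ j.range) : H := (exists_cocycle j g c).choose

theorem map_cosetCocycle (g : G) (c : G ⧸ j.range) :
    j (cosetCocycle j g c) = (g • c).out⁻¹ * g * c.out :=
  (exists_cocycle j g c).choose_spec

/-- The module induced along the injection `j` from a module `M` over the group algebra
of `H`. -/
def InducedModule (_ : Function.Injective j) (M : Type) [AddCommGroup M] : Type :=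
  G ⧸ j.range →₀ M

variable {M N P : Type} [AddCommGroup M] [AddCommGroup N] [AddCommGroup P]

noncomputable instance : AddCommGroup (InducedModule j hj M) :=
  inferInstanceAs (AddCommGroup (G ⧸ j.range →₀ M))

variable [Module (MonoidAlgebra k H) M] [Module (MonoidAlgebra k H) N]
  [Module (MonoidAlgebra k H) P]

variable {j}

/-- A scalar from `k` acting on the module underlying the induced module. -/
noncomputable def inducedScalar (j : H →* G) (M : Type) [AddCommGroup M]
    [Module (MonoidAlgebra k H) M] (a : k) : (G ⧸ j.range →₀ M) →+ (G ⧸ j.range →₀ M) :=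
  Finsupp.liftAddHom fun c => (Finsupp.singleAddHom c).comp
    (DistribSMul.toAddMonoidHom M (single 1 a : MonoidAlgebra k H))

theorem inducedScalar_single (a : k) (c : G ⧸ j.range) (m : M) :
    inducedScalar j M a (Finsupp.single c m) =
      Finsupp.single c ((single 1 a : MonoidAlgebra k H) • m) := by
  simp [inducedScalar]

/-- A group element acting on the module underlying the induced module. -/
noncomputable def inducedTranslate (k : Type) [CommRing k] (j : H →* G) (M : Type)
    [AddCommGroup M] [Module (MonoidAlgebra k H) M] (g : G) :
    (G ⧸ j.range →₀ M) →+ (G ⧸ j.range →₀ M) :=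
  Finsupp.liftAddHom fun c => (Finsupp.singleAddHom (g • c)).comp
    (DistribSMul.toAddMonoidHom M (single (cosetCocycle j g c) 1 : MonoidAlgebra k H))

theorem inducedTranslate_single (g : G) (c : G ⧸ j.range) (m : M) :
    inducedTranslate k j M g (Finsupp.single c m) =
      Finsupp.single (g • c) ((single (cosetCocycle j g c) 1 : MonoidAlgebra k H) • m) := by
  simp [inducedTranslate]

/-- The action of the group algebra of `G` on the induced module. -/
noncomputable def inducedAction (k : Type) [CommRing k] (hj : Function.Injective j) (M : Type)
    [AddCommGroup M] [Module (MonoidAlgebra k H) M] :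
    MonoidAlgebra k G →+* AddMonoid.End (G ⧸ j.range →₀ M) :=
  liftNCRingHom
    { toFun := inducedScalar j M
      map_one' := Finsupp.addHom_ext fun c m => by
        change inducedScalar j M (1 : k) (Finsupp.single c m) = Finsupp.single c m
        rw [inducedScalar_single, ← one_def, one_smul]
      map_zero' := Finsupp.addHom_ext fun c m => by
        change inducedScalar j M (0 : k) (Finsupp.single c m) = 0
        rw [inducedScalar_single, single_zero, zero_smul, Finsupp.single_zero]
      map_mul' := fun a b => Finsupp.addHom_ext fun c m => by
        change inducedScalar j M (a * b) (Finsupp.single c m) =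
          inducedScalar j M a (inducedScalar j M b (Finsupp.single c m))
        simp only [inducedScalar_single, ← mul_smul, single_mul_single, one_mul]
      map_add' := fun a b => Finsupp.addHom_ext fun c m => by
        change inducedScalar j M (a + b) (Finsupp.single c m) =
          inducedScalar j M a (Finsupp.single c m) + inducedScalar j M b (Finsupp.single c m)
        simp only [inducedScalar_single, single_add, add_smul, Finsupp.single_add] }
    { toFun := inducedTranslate k j M
      map_one' := Finsupp.addHom_ext fun c m => by
        change inducedTranslate k j M 1 (Finsupp.single c m) = Finsupp.single c m
        have : cosetCocycle j 1 c = 1 := hj (by simp [map_cosetCocycle])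
        rw [inducedTranslate_single, this, one_smul, ← one_def, one_smul]
      map_mul' := fun g g' => Finsupp.addHom_ext fun c m => by
        change inducedTranslate k j M (g * g') (Finsupp.single c m) =
          inducedTranslate k j M g (inducedTranslate k j M g' (Finsupp.single c m))
        have : cosetCocycle j (g * g') c = cosetCocycle j g (g' • c) * cosetCocycle j g' c :=
          hj (by
            simp only [map_cosetCocycle, map_mul, mul_smul]
            group)
        simp only [inducedTranslate_single, this, ← mul_smul, single_mul_single, one_mul] }
    fun a g => Finsupp.addHom_ext fun c m => by
      change inducedScalar j M a (inducedTranslate k j M g (Finsupp.single c m)) =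
        inducedTranslate k j M g (inducedScalar j M a (Finsupp.single c m))
      simp only [inducedTranslate_single, inducedScalar_single, ← mul_smul, single_mul_single,
        one_mul, mul_one]

theorem inducedAction_single (g : G) (a : k) (c : G ⧸ j.range) (m : M) :
    inducedAction k hj M (single g a) (Finsupp.single c m) =
      Finsupp.single (g • c) ((single (cosetCocycle j g c) a : MonoidAlgebra k H) • m) := by
  refine (DFunLike.congr_fun (F := AddMonoid.End (G ⧸ j.range →₀ M))
    (liftNCRingHom_single _ _ _ g a) (Finsupp.single c m)).trans ?_
  change inducedScalar j M a (inducedTranslate k j M g (Finsupp.single c m)) = _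
  simp only [inducedTranslate_single, inducedScalar_single, ← mul_smul, single_mul_single,
    one_mul, mul_one]

namespace InducedModule

/-- The element of the induced module supported on the coset `c` with value `m`. -/
noncomputable def of (c : G ⧸ j.range) : M →+ InducedModule j hj M := Finsupp.singleAddHom c

variable {hj} in
theorem addHom_ext {A : Type} [AddCommGroup A] {f f' : InducedModule j hj M →+ A}
    (h : ∀ c m, f (of hj c m) = f' (of hj c m)) : f = f' :=
  Finsupp.addHom_ext h

noncomputable instance : Module (MonoidAlgebra k G) (InducedModule j hj M) :=
  letI : Module (AddMonoid.End (G ⧸ j.range →₀ M)) (InducedModule j hj M) :=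
    inferInstanceAs (Module (AddMonoid.End (G ⧸ j.range →₀ M)) (G ⧸ j.range →₀ M))
  Module.compHom (InducedModule j hj M) (inducedAction k hj M)

theorem single_smul_of (g : G) (a : k) (c : G ⧸ j.range) (m : M) :
    (single g a : MonoidAlgebra k G) • of hj c m =
      of hj (g • c) ((single (cosetCocycle j g c) a : MonoidAlgebra k H) • m) :=
  inducedAction_single hj g a c m

/-- To check linearity of an additive map out of an induced module it suffices to consider
generators. -/
noncomputable def lift {A : Type} [AddCommGroup A] [Module (MonoidAlgebra k G) A]
    (f : G ⧸ j.range → M →+ A)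
    (hf : ∀ (g : G) (a : k) c m, f (g • c) ((single (cosetCocycle j g c) a : MonoidAlgebra k H) • m)
      = (single g a : MonoidAlgebra k G) • f c m) :
    InducedModule j hj M →ₗ[MonoidAlgebra k G] A :=
  linearMapOfSingle (Finsupp.liftAddHom f : (G ⧸ j.range →₀ M) →+ A) fun g a => by
    let F : InducedModule j hj M →+ A := Finsupp.liftAddHom f
    have hF : ∀ c m, F (of hj c m) = f c m := Finsupp.liftAddHom_apply_single f
    refine DFunLike.congr_fun (f := F.comp
      (DistribSMul.toAddMonoidHom (InducedModule j hj M) (single g a : MonoidAlgebra k G)))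
      (g := (DistribSMul.toAddMonoidHom A (single g a : MonoidAlgebra k G)).comp F)
      (addHom_ext fun c m => ?_)
    change F ((single g a : MonoidAlgebra k G) • of hj c m) =
      (single g a : MonoidAlgebra k G) • F (of hj c m)
    rw [single_smul_of, hF, hF, hf]

theorem lift_of {A : Type} [AddCommGroup A] [Module (MonoidAlgebra k G) A]
    (f : G ⧸ j.range → M →+ A)
    (hf : ∀ (g : G) (a : k) c m, f (g • c) ((single (cosetCocycle j g c) a : MonoidAlgebra k H) • m)
      = (single g a : MonoidAlgebra k G) • f c m) (c : G ⧸ j.range) (m : M) :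
    lift hj f hf (of hj c m) = f c m :=
  Finsupp.liftAddHom_apply_single f c m

/-- Functoriality of induction. -/
noncomputable def map (f : M →ₗ[MonoidAlgebra k H] N) :
    InducedModule j hj M →ₗ[MonoidAlgebra k G] InducedModule j hj N :=
  lift hj (fun c => (of hj c).comp f.toAddMonoidHom) fun g a c m => by
    simp [single_smul_of]

theorem map_of (f : M →ₗ[MonoidAlgebra k H] N) (c : G ⧸ j.range) (m : M) :
    map (k := k) hj f (of hj c m) = of hj c (f m) :=
  lift_of hj _ _ c m

/-- The value of an element of the induced module at a coset. -/
def eval (x : InducedModule j hj M) (c : G ⧸ j.range) : M :=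
  DFunLike.coe (F := G ⧸ j.range →₀ M) x c

variable {hj} in
theorem ext_eval {x y : InducedModule j hj M} (h : ∀ c, eval hj x c = eval hj y c) : x = y :=
  Finsupp.ext h

theorem eval_map (f : M →ₗ[MonoidAlgebra k H] N) (x : InducedModule j hj M) (c : G ⧸ j.range) :
    eval hj (map (k := k) hj f x) c = f (eval hj x c) := by
  have : (map (k := k) hj f).toAddMonoidHom = (Finsupp.mapRange.addMonoidHom f.toAddMonoidHom :
      (G ⧸ j.range →₀ M) →+ (G ⧸ j.range →₀ N)) := addHom_ext fun c m => by
    refine (map_of (k := k) hj f c m).trans ?_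
    exact (Finsupp.mapRange_single (hf := f.map_zero)).symm
  exact DFunLike.congr_fun (F := G ⧸ j.range →₀ N) (DFunLike.congr_fun this x) c

theorem map_injective (f : M →ₗ[MonoidAlgebra k H] N) (hf : Function.Injective f) :
    Function.Injective (map hj f) := fun x y hxy =>
  ext_eval fun c => hf (by rw [← eval_map, ← eval_map, hxy])

theorem map_surjective (f : M →ₗ[MonoidAlgebra k H] N) (hf : Function.Surjective f) :
    Function.Surjective (map hj f) := fun y => by
  obtain ⟨x, hx⟩ := Finsupp.mapRange_surjective f f.map_zero hf y
  exact ⟨x, ext_eval fun c => (eval_map hj f x c).trans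
    (DFunLike.congr_fun (F := G ⧸ j.range →₀ N) hx c)⟩

theorem map_exact (f : M →ₗ[MonoidAlgebra k H] N) (f' : N →ₗ[MonoidAlgebra k H] P)
    (hf : Function.Injective f) (h : Function.Exact f f') :
    Function.Exact (map hj f) (map hj f') := fun y => by
  constructor
  · intro hy
    have hy' : ∀ c, f' (eval hj y c) = 0 := fun c => by
      rw [← eval_map, hy]; rfl
    choose x hx using fun c => (h _).mp (hy' c)
    have hfin : x.support.Finite := by
      refine (Finsupp.hasFiniteSupport (α := G ⧸ j.range) (M := N) y).subset fun c hc h0 => hc ?_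
      exact hf (by rw [hx, map_zero]; exact h0)
    exact ⟨(Finsupp.ofSupportFinite x hfin : G ⧸ j.range →₀ M),
      ext_eval fun c => (eval_map hj f _ c).trans (hx c)⟩
  · rintro ⟨x, rfl⟩
    refine ext_eval fun c => ?_
    rw [eval_map, eval_map]
    exact h.apply_apply_eq_zero _

end InducedModule

theorem HasTraceRank.induced {c : k →+* ℚ} {q : ℚ} (h : HasTraceRank (kaplanskyTrace c H) P q) :
    HasTraceRank (kaplanskyTrace c G) (InducedModule j hj P) q := by
  obtain ⟨ι, _, x, f, hf, rfl⟩ := h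
  let e : G := ((1 : G) : G ⧸ j.range).out
  have he : e ∈ j.range := by
    have := QuotientGroup.out_eq' ((1 : G) : G ⧸ j.range)
    simpa using QuotientGroup.eq.mp this
  let u : P → InducedModule j hj P := fun m =>
    (single e⁻¹ 1 : MonoidAlgebra k G) • InducedModule.of hj ((1 : G) : G ⧸ j.range) m
  have hu : ∀ (s : MonoidAlgebra k H) m, mapDomainRingHom k j s • u m = u (s • m) := fun s m => by
    induction s using MonoidAlgebra.induction_linear with
    | zero => simp [u]
    | add x x' hx hx' => simp only [map_add, add_smul, hx, hx', u, smul_add]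
    | single h a =>
      have h1 : ∀ g ∈ j.range, g • ((1 : G) : G ⧸ j.range) = ((1 : G) : G ⧸ j.range) :=
        fun g hg => by
          change ((g * 1 : G) : G ⧸ j.range) = _
          rw [QuotientGroup.eq]
          simpa using hg
      have h2 : e⁻¹ ∈ j.range := inv_mem he
      have h3 : j h * e⁻¹ ∈ j.range := mul_mem ⟨h, rfl⟩ h2
      have h4 : cosetCocycle j (j h * e⁻¹) ((1 : G) : G ⧸ j.range) =
          cosetCocycle j e⁻¹ ((1 : G) : G ⧸ j.range) * h := hj (by
        simp only [map_mul, map_cosetCocycle, h1 _ h2, h1 _ h3]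
        change e⁻¹ * (j h * e⁻¹) * e = e⁻¹ * e⁻¹ * e * j h
        group)
      simp only [u, mapDomainRingHom_apply, mapDomain_single]
      rw [← mul_smul, single_mul_single, InducedModule.single_smul_of,
        InducedModule.single_smul_of, h1 _ h2, h1 _ h3, h4, ← mul_smul, single_mul_single,
        mul_one, one_mul]
  let F : ι → InducedModule j hj P →ₗ[MonoidAlgebra k G] MonoidAlgebra k G := fun i =>
    InducedModule.lift hj (fun c => (AddMonoidHom.mulLeft (single c.out 1)).comp
      ((mapDomainRingHom k j).toAddMonoidHom.comp (f i).toAddMonoidHom)) fun g a c m => by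
        simp only [AddMonoidHom.comp_apply, LinearMap.toAddMonoidHom_coe, map_smul, smul_eq_mul]
        simp only [RingHom.toAddMonoidHom_eq_coe, AddMonoidHom.coe_coe, map_mul,
          AddMonoidHom.coe_mulLeft, ← mul_assoc, mapDomainRingHom_apply, mapDomain_single,
          single_mul_single, map_cosetCocycle, mul_inv_cancel, one_mul, mul_one]
  have hF : ∀ i c m, F i (InducedModule.of hj c m) =
      single c.out 1 * mapDomainRingHom k j (f i m) := fun i c m =>
    InducedModule.lift_of hj _ _ c m
  refine ⟨ι, ‹_›, fun i => u (x i), F, ?_, ?_⟩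
  · let S : InducedModule j hj P →ₗ[MonoidAlgebra k G] InducedModule j hj P :=
      ∑ i, (F i).smulRight (u (x i))
    have hS : S.toAddMonoidHom = AddMonoidHom.id _ := InducedModule.addHom_ext fun c m => by
      have hsum : ∑ i, u (f i m • x i) = u m := by
        conv_rhs => rw [← hf m]
        simp [u, Finset.smul_sum]
      have h1 : (c.out * e⁻¹) • ((1 : G) : G ⧸ j.range) = c := by
        change ((c.out * e⁻¹ * 1 : G) : G ⧸ j.range) = c
        conv_rhs => rw [← QuotientGroup.out_eq' c]
        rw [QuotientGroup.eq]
        simpa using he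
      have h2 : cosetCocycle j (c.out * e⁻¹) ((1 : G) : G ⧸ j.range) = 1 := hj (by
        simp only [map_cosetCocycle, h1, map_one]
        change c.out⁻¹ * (c.out * e⁻¹) * e = 1
        group)
      simp only [S, LinearMap.toAddMonoidHom_coe, LinearMap.sum_apply, LinearMap.smulRight_apply,
        hF, mul_smul, hu, AddMonoidHom.id_apply]
      rw [← Finset.smul_sum, hsum]
      simp only [u]
      rw [← mul_smul, single_mul_single, InducedModule.single_smul_of, h1, h2, mul_one, ← one_def,
        one_smul]
    intro v
    have := DFunLike.congr_fun hS v
    simpa [S] using this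
  · refine Finset.sum_congr rfl fun i _ => ?_
    simp only [u, map_smul, hF, smul_eq_mul, ← mul_assoc, single_mul_single]
    change _ = kaplanskyTrace c G (single (e⁻¹ * e) (1 * 1) * _)
    rw [inv_mul_cancel, mul_one, ← one_def, one_mul, kaplanskyTrace_mapDomain c j hj]

theorem HasEulerChar.induced {c : k →+* ℚ} {n : ℕ} {q : ℚ}
    (h : HasEulerChar (kaplanskyTrace c H) n M q) :
    HasEulerChar (kaplanskyTrace c G) n (InducedModule j hj M) q := by
  induction n generalizing M q with
  | zero => exact HasTraceRank.induced hj h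
  | succ n ih =>
    obtain ⟨P, _, _, p, r, s, hp, hP, hk, rfl⟩ := h
    exact (ih hk).of_exact (hP.induced hj) (InducedModule.map hj (LinearMap.ker p).subtype)
      (InducedModule.map hj p) (InducedModule.map_injective hj _ (Submodule.subtype_injective _))
      (InducedModule.map_exact hj _ _ (Submodule.subtype_injective _)
        (LinearMap.exact_subtype_ker_map p)) (InducedModule.map_surjective hj p hp)

end Induction

end GroupAlgebra

section Restriction

open MonoidAlgebra

variable {k : Type} [CommRing k] {A : Type} [Group A] (K : Subgroup A)

open scoped Classical in
/-- The component of an element of `k[A]` in the left coset of `k[K]` determined by `c`. -/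
noncomputable def cosetComponent (k : Type) [CommRing k] (c : A ⧸ K) :
    MonoidAlgebra k A →+ MonoidAlgebra k K :=
  (Finsupp.liftAddHom fun a : A =>
    if h : a * c.out ∈ K then
      (singleAddHom (⟨a * c.out, h⟩ : K) : k →+ MonoidAlgebra k K) else 0).comp
    coeffAddEquiv.toAddMonoidHom

open scoped Classical in
theorem cosetComponent_single (c : A ⧸ K) (a : A) (r : k) :
    cosetComponent K k c (single a r) =
      if h : a * c.out ∈ K then single (⟨a * c.out, h⟩ : K) r else 0 := by
  have : cosetComponent K k c (single a r) = (if h : a * c.out ∈ K then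
      (singleAddHom (⟨a * c.out, h⟩ : K) : k →+ MonoidAlgebra k K) else 0) r :=
    Finsupp.liftAddHom_apply_single _ a r
  rw [this]
  split_ifs <;> rfl

theorem cosetComponent_mul (c : A ⧸ K) (s : MonoidAlgebra k K) (x : MonoidAlgebra k A) :
    cosetComponent K k c (mapDomainRingHom k K.subtype s * x) = s * cosetComponent K k c x := by
  induction x using MonoidAlgebra.induction_linear with
  | zero => simp
  | add x x' hx hx' => simp only [mul_add, map_add, hx, hx']
  | single a r =>
    induction s using MonoidAlgebra.induction_linear with
    | zero => simp
    | add x x' hx hx' => simp only [add_mul, map_add, hx, hx']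
    | single h b =>
      rw [mapDomainRingHom_apply, mapDomain_single, single_mul_single, cosetComponent_single,
        cosetComponent_single]
      have : (K.subtype h * a) * c.out ∈ K ↔ a * c.out ∈ K := by
        rw [mul_assoc]
        exact K.mul_mem_cancel_left h.2
      by_cases ha : a * c.out ∈ K
      · rw [dif_pos ha, dif_pos (this.mpr ha), single_mul_single]
        congr 1
        exact Subtype.ext (mul_assoc _ _ _)
      · rw [dif_neg ha, dif_neg (this.not.mpr ha), mul_zero]

theorem sum_cosetComponent [Fintype (A ⧸ K)] (x : MonoidAlgebra k A) :
    ∑ c : A ⧸ K, mapDomainRingHom k K.subtype (cosetComponent K k c x) * single c.out⁻¹ 1 = x := by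
  induction x using MonoidAlgebra.induction_linear with
  | zero => simp
  | add x x' hx hx' => simp only [add_mul, map_add, Finset.sum_add_distrib, hx, hx']
  | single a r =>
    have key : ∀ c : A ⧸ K, a * c.out ∈ K ↔ c = (a⁻¹ : A) := fun c => by
      rw [← QuotientGroup.out_eq' c, eq_comm, QuotientGroup.eq, inv_inv, QuotientGroup.out_eq' c]
    rw [Finset.sum_eq_single ((a⁻¹ : A) : A ⧸ K)]
    · rw [cosetComponent_single, dif_pos ((key _).mpr rfl), mapDomainRingHom_apply,
        mapDomain_single, single_mul_single]
      simp
    · intro c _ hc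
      rw [cosetComponent_single, dif_neg ((key _).not.mpr hc)]
      simp
    · simp

theorem kaplanskyTrace_cosetComponent (τ : k →+* ℚ) (c : A ⧸ K) (x : MonoidAlgebra k A) :
    kaplanskyTrace τ K (cosetComponent K k c (single c.out⁻¹ 1 * x)) = kaplanskyTrace τ A x := by
  classical
  induction x using MonoidAlgebra.induction_linear with
  | zero => simp
  | add x x' hx hx' => simp only [mul_add, map_add, hx, hx']
  | single a r =>
    rw [single_mul_single, cosetComponent_single, kaplanskyTrace_single]
    have key : c.out⁻¹ * a * c.out = 1 ↔ a = 1 := by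
      constructor
      · intro h
        have := congrArg (fun y => c.out * y * c.out⁻¹) h
        simpa [mul_assoc] using this
      · rintro rfl
        simp
    by_cases ha : a = 1
    · have h1 := key.mpr ha
      have h2 : c.out⁻¹ * a * c.out ∈ K := h1 ▸ K.one_mem
      rw [dif_pos h2, if_pos ha, kaplanskyTrace_single, if_pos (Subtype.ext h1), one_mul]
    · rw [if_neg ha]
      split_ifs with h
      · rw [kaplanskyTrace_single, if_neg]
        exact fun h' => ha (key.mp (congrArg Subtype.val h'))
      · simp

variable {M P : Type} [AddCommGroup M] [Module (MonoidAlgebra k A) M]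
  [Module (MonoidAlgebra k K) M] [AddCommGroup P] [Module (MonoidAlgebra k A) P]
  [Module (MonoidAlgebra k K) P]

theorem HasTraceRank.restrict (hK : K.index ≠ 0)
    (hs : ∀ (s : MonoidAlgebra k K) (v : P), s • v = mapDomainRingHom k K.subtype s • v)
    {τ : k →+* ℚ} {q : ℚ} (h : HasTraceRank (kaplanskyTrace τ A) P q) :
    HasTraceRank (kaplanskyTrace τ K) P (K.index * q) := by
  obtain ⟨ι, _, x, f, hf, rfl⟩ := h
  let : Fintype (A ⧸ K) := Subgroup.fintypeOfIndexNeZero hK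
  let F : ι × (A ⧸ K) → P →ₗ[MonoidAlgebra k K] MonoidAlgebra k K := fun i =>
    { toFun := fun v => cosetComponent K k i.2 (f i.1 v)
      map_add' := by simp
      map_smul' := fun s v => by
        simp only [hs, map_smul, smul_eq_mul, cosetComponent_mul, RingHom.id_apply] }
  refine ⟨ι × (A ⧸ K), inferInstance,
    fun i => (single i.2.out⁻¹ 1 : MonoidAlgebra k A) • x i.1, F, fun v => ?_, ?_⟩
  · rw [Fintype.sum_prod_type]
    conv_rhs => rw [← hf v]
    refine Finset.sum_congr rfl fun i _ => ?_
    conv_rhs => rw [← sum_cosetComponent K (f i v)]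
    rw [Finset.sum_smul]
    refine Finset.sum_congr rfl fun c _ => ?_
    rw [hs, mul_smul]
    rfl
  · rw [Fintype.sum_prod_type, Finset.mul_sum]
    refine Finset.sum_congr rfl fun i _ => ?_
    have : ∀ c : A ⧸ K, kaplanskyTrace τ K (F (i, c) ((single c.out⁻¹ 1 : MonoidAlgebra k A) • x i))
        = kaplanskyTrace τ A (f i (x i)) := fun c => by
      change kaplanskyTrace τ K (cosetComponent K k c (f i _)) = _
      rw [map_smul, smul_eq_mul, kaplanskyTrace_cosetComponent]
    simp only [this]
    rw [Finset.sum_const, nsmul_eq_mul, Finset.card_univ, ← Nat.card_eq_fintype_card]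
    rfl

theorem HasEulerChar.restrict (hK : K.index ≠ 0)
    (hs : ∀ (s : MonoidAlgebra k K) (v : M), s • v = mapDomainRingHom k K.subtype s • v)
    {τ : k →+* ℚ} {n : ℕ} {q : ℚ} (h : HasEulerChar (kaplanskyTrace τ A) n M q) :
    HasEulerChar (kaplanskyTrace τ K) n M (K.index * q) := by
  induction n generalizing M q with
  | zero => exact HasTraceRank.restrict K hK hs h
  | succ n ih =>
    obtain ⟨P, _, _, p, r, s, hp, hP, hk, rfl⟩ := h
    let := Module.compHom P (mapDomainRingHom k K.subtype)
    let := Module.compHom (LinearMap.ker p) (mapDomainRingHom k K.subtype)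
    have h1 : ∀ (s : MonoidAlgebra k K) (v : P), s • v = mapDomainRingHom k K.subtype s • v :=
      fun _ _ => rfl
    have h2 : ∀ (s : MonoidAlgebra k K) (v : LinearMap.ker p),
      s • v = mapDomainRingHom k K.subtype s • v := fun _ _ => rfl
    let i' : LinearMap.ker p →ₗ[MonoidAlgebra k K] P :=
      { toFun := Subtype.val
        map_add' := fun _ _ => rfl
        map_smul' := fun _ _ => rfl }
    let p' : P →ₗ[MonoidAlgebra k K] M :=
      { toFun := p
        map_add' := map_add p
        map_smul' := fun s v => by
          rw [RingHom.id_apply, hs, h1, map_smul] }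
    rw [mul_sub]
    exact (ih h2 hk).of_exact (hP.restrict K hK h1) i' p' Subtype.val_injective
      (LinearMap.exact_subtype_ker_map p) hp

end Restriction

section BaseChange

open MonoidAlgebra TensorProduct

variable {K : Type} [Group K]

/-- The rationalization `ℚ ⊗ M` of a module `M` over the integral group ring. -/
def Rationalization (M : Type) [AddCommGroup M] : Type := ℚ ⊗[ℤ] M

variable (M : Type) {N P : Type} [AddCommGroup M] [AddCommGroup N] [AddCommGroup P]
  [Module (MonoidAlgebra ℤ K) M] [Module (MonoidAlgebra ℤ K) N] [Module (MonoidAlgebra ℤ K) P]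

noncomputable instance : AddCommGroup (Rationalization M) :=
  inferInstanceAs (AddCommGroup (ℚ ⊗[ℤ] M))

/-- The action of the rational group algebra on `ℚ ⊗ M`. -/
noncomputable def rationalAction (K : Type) [Group K] (M : Type) [AddCommGroup M]
    [Module (MonoidAlgebra ℤ K) M] : MonoidAlgebra ℚ K →+* Module.End ℤ (ℚ ⊗[ℤ] M) :=
  liftNCRingHom
    ((Module.End.rTensorAlgHom ℤ ℚ M).toRingHom.comp (Algebra.lmul ℤ ℚ).toRingHom)
    ((Module.End.lTensorAlgHom ℤ M ℚ).toMonoidHom.comp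
      ((Module.toModuleEnd ℤ (S := MonoidAlgebra ℤ K) M : _ →* _).comp (MonoidAlgebra.of ℤ K)))
    fun q g => by
      exact TensorProduct.ext' fun p m => rfl

theorem rationalAction_single (g : K) (q p : ℚ) (m : M) :
    rationalAction K M (single g q) (p ⊗ₜ m) =
      (q * p) ⊗ₜ[ℤ] ((single g 1 : MonoidAlgebra ℤ K) • m) := by
  exact DFunLike.congr_fun (F := Module.End ℤ (ℚ ⊗[ℤ] M)) (liftNCRingHom_single _ _ _ g q) (p ⊗ₜ m)

variable {M}

noncomputable instance : Module (MonoidAlgebra ℚ K) (Rationalization M) :=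
  let _ : Module (Module.End ℤ (ℚ ⊗[ℤ] M)) (Rationalization M) :=
    inferInstanceAs (Module (Module.End ℤ (ℚ ⊗[ℤ] M)) (ℚ ⊗[ℤ] M))
  Module.compHom (Rationalization M) (rationalAction K M)

namespace Rationalization

/-- The pure tensor `p ⊗ m`. -/
def tmul (p : ℚ) (m : M) : Rationalization M := p ⊗ₜ[ℤ] m

theorem tmul_add (p : ℚ) (m m' : M) : tmul p (m + m') = tmul p m + tmul p m' :=
  TensorProduct.tmul_add p m m'

theorem tmul_sum {ι : Type} (s : Finset ι) (p : ℚ) (m : ι → M) :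
    tmul p (∑ i ∈ s, m i) = ∑ i ∈ s, tmul p (m i) :=
  TensorProduct.tmul_sum p s m

theorem single_smul_tmul (g : K) (q p : ℚ) (m : M) :
    (single g q : MonoidAlgebra ℚ K) • tmul p m =
      tmul (q * p) ((single g 1 : MonoidAlgebra ℤ K) • m) :=
  rationalAction_single M g q p m

theorem addHom_ext {A : Type} [AddCommGroup A] {f f' : Rationalization M →+ A}
    (h : ∀ p m, f (tmul p m) = f' (tmul p m)) : f = f' :=
  AddMonoidHom.toIntLinearMap_injective
    (TensorProduct.ext' (M := ℚ) (N := M) (P₂ := A) (g := AddMonoidHom.toIntLinearMap f)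
      (h := AddMonoidHom.toIntLinearMap f') h)

/-- Extend a biadditive map commuting with the action of the monomials to a linear map. -/
noncomputable def lift {A : Type} [AddCommGroup A] [Module (MonoidAlgebra ℚ K) A]
    (f : ℚ ⊗[ℤ] M →+ A)
    (hf : ∀ (g : K) (q p : ℚ) (m : M), f ((q * p) ⊗ₜ ((single g 1 : MonoidAlgebra ℤ K) • m)) =
      (single g q : MonoidAlgebra ℚ K) • f (p ⊗ₜ m)) :
    Rationalization M →ₗ[MonoidAlgebra ℚ K] A :=
  linearMapOfSingle (M := Rationalization M) f fun g q => by
    let F : Rationalization M →+ A := f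
    refine DFunLike.congr_fun (f := F.comp
      (DistribSMul.toAddMonoidHom (Rationalization M) (single g q : MonoidAlgebra ℚ K)))
      (g := (DistribSMul.toAddMonoidHom A (single g q : MonoidAlgebra ℚ K)).comp F)
      (addHom_ext fun p m => ?_)
    change F ((single g q : MonoidAlgebra ℚ K) • tmul p m) =
      (single g q : MonoidAlgebra ℚ K) • F (tmul p m)
    rw [single_smul_tmul]
    exact hf g q p m

/-- Functoriality of rationalization. -/
noncomputable def map (f : M →ₗ[MonoidAlgebra ℤ K] N) :
    Rationalization M →ₗ[MonoidAlgebra ℚ K] Rationalization N :=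
  lift ((f.toAddMonoidHom.toIntLinearMap.lTensor ℚ).toAddMonoidHom :
    ℚ ⊗[ℤ] M →+ Rationalization N) fun g q p m => by
      refine Eq.trans ?_ (single_smul_tmul g q p (f m)).symm
      rw [← map_smul]
      rfl

theorem map_injective (f : M →ₗ[MonoidAlgebra ℤ K] N) (hf : Function.Injective f) :
    Function.Injective (map f) :=
  Module.Flat.lTensor_preserves_injective_linearMap (M := ℚ)
    f.toAddMonoidHom.toIntLinearMap hf

theorem map_surjective (f : M →ₗ[MonoidAlgebra ℤ K] N) (hf : Function.Surjective f) :
    Function.Surjective (map f) :=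
  LinearMap.lTensor_surjective ℚ (g := f.toAddMonoidHom.toIntLinearMap) hf

theorem map_exact (f : M →ₗ[MonoidAlgebra ℤ K] N) (f' : N →ₗ[MonoidAlgebra ℤ K] P)
    (h : Function.Exact f f') (hf' : Function.Surjective f') :
    Function.Exact (map f) (map f') :=
  lTensor_exact ℚ (f := f.toAddMonoidHom.toIntLinearMap) (g := f'.toAddMonoidHom.toIntLinearMap)
    h hf'

theorem map_smul_one_tmul (s : MonoidAlgebra ℤ K) (m : M) :
    mapRingHom K (Int.castRingHom ℚ) s • tmul 1 m = tmul 1 (s • m) := by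
  induction s using MonoidAlgebra.induction_linear with
  | zero =>
    rw [map_zero, zero_smul, zero_smul]
    exact (TensorProduct.tmul_zero M (1 : ℚ)).symm
  | add x y hx hy => rw [map_add, add_smul, add_smul, hx, hy, tmul_add]
  | single g a =>
    have h1 : (single g a : MonoidAlgebra ℤ K) = a • single g 1 := by simp
    rw [mapRingHom_single, single_smul_tmul, h1, smul_assoc]
    refine Eq.trans ?_ (TensorProduct.smul_tmul a (1 : ℚ) ((single g 1 : MonoidAlgebra ℤ K) • m))
    simp [tmul]
    rfl

end Rationalization

theorem kaplanskyTrace_mapRingHom (x : MonoidAlgebra ℤ K) :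
    kaplanskyTrace (RingHom.id ℚ) K (mapRingHom K (Int.castRingHom ℚ) x) =
      kaplanskyTrace (Int.castRingHom ℚ) K x := by
  classical
  induction x using MonoidAlgebra.induction_linear with
  | zero => simp
  | add x y hx hy => simp only [map_add, hx, hy]
  | single g a => simp [kaplanskyTrace_single]

theorem HasTraceRank.rationalization {q : ℚ}
    (h : HasTraceRank (kaplanskyTrace (Int.castRingHom ℚ) K) P q) :
    HasTraceRank (kaplanskyTrace (RingHom.id ℚ) K) (Rationalization P) q := by
  obtain ⟨ι, _, x, f, hf, rfl⟩ := h
  let F₀ : ι → ℚ →+ P →+ MonoidAlgebra ℚ K := fun i =>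
    (AddMonoidHom.mul.comp (singleAddHom (1 : K))).compl₂
      ((mapRingHom K (Int.castRingHom ℚ)).toAddMonoidHom.comp (f i).toAddMonoidHom)
  have hF₀ : ∀ i p v, F₀ i p v = single 1 p * mapRingHom K (Int.castRingHom ℚ) (f i v) :=
    fun _ _ _ => rfl
  let F : ι → Rationalization P →ₗ[MonoidAlgebra ℚ K] MonoidAlgebra ℚ K := fun i =>
    Rationalization.lift (TensorProduct.liftAddHom (F₀ i) fun n p v => by
      rw [map_zsmul, map_zsmul, AddMonoidHom.zsmul_apply])
      fun g q p v => by
        rw [TensorProduct.liftAddHom_tmul, TensorProduct.liftAddHom_tmul, hF₀, hF₀, map_smul,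
          smul_eq_mul, map_mul, mapRingHom_single, smul_eq_mul, ← mul_assoc, ← mul_assoc,
          single_mul_single, single_mul_single]
        simp
  have hF : ∀ i p v, F i (Rationalization.tmul p v) =
      single 1 p * mapRingHom K (Int.castRingHom ℚ) (f i v) := fun _ _ _ => rfl
  refine ⟨ι, ‹_›, fun i => Rationalization.tmul 1 (x i), F, ?_, ?_⟩
  · let S : Rationalization P →ₗ[MonoidAlgebra ℚ K] Rationalization P :=
      ∑ i, (F i).smulRight (Rationalization.tmul 1 (x i))
    have hS : S.toAddMonoidHom = AddMonoidHom.id _ := Rationalization.addHom_ext fun p v => by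
      simp only [S, LinearMap.toAddMonoidHom_coe, LinearMap.sum_apply, LinearMap.smulRight_apply,
        hF, mul_smul, Rationalization.map_smul_one_tmul, AddMonoidHom.id_apply]
      rw [← Finset.smul_sum, ← Rationalization.tmul_sum, hf, Rationalization.single_smul_tmul,
        ← one_def, one_smul, mul_one]
    intro v
    have := DFunLike.congr_fun hS v
    simpa [S] using this
  · refine Finset.sum_congr rfl fun i _ => ?_
    rw [hF, ← one_def, one_mul, kaplanskyTrace_mapRingHom]

theorem HasEulerChar.rationalization {n : ℕ} {q : ℚ}
    (h : HasEulerChar (kaplanskyTrace (Int.castRingHom ℚ) K) n M q) :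
    HasEulerChar (kaplanskyTrace (RingHom.id ℚ) K) n (Rationalization M) q := by
  induction n generalizing M q with
  | zero => exact HasTraceRank.rationalization h
  | succ n ih =>
    obtain ⟨P, _, _, p, r, s, hp, hP, hk, rfl⟩ := h
    exact (ih hk).of_exact hP.rationalization (Rationalization.map (LinearMap.ker p).subtype)
      (Rationalization.map p) (Rationalization.map_injective _ (Submodule.subtype_injective _))
      (Rationalization.map_exact _ _ (LinearMap.exact_subtype_ker_map p) hp)
      (Rationalization.map_surjective p hp)

theorem nonempty_rationalization_equiv_trivialModule (K : Type) [Group K] :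
    Nonempty (Rationalization (TrivialModule ℤ K) ≃ₗ[MonoidAlgebra ℚ K] TrivialModule ℚ K) := by
  let e : ℚ ⊗[ℤ] (TrivialModule ℤ K) ≃+ TrivialModule ℚ K := (TensorProduct.rid ℤ ℚ).toAddEquiv
  let t : TrivialModule ℤ K → ℤ := fun m => m
  have he : ∀ (p : ℚ) (m : TrivialModule ℤ K), e (p ⊗ₜ[ℤ] m) = (t m • p : ℚ) :=
    fun p m => TensorProduct.rid_tmul (R := ℤ) (M := ℚ) p (t m)
  refine ⟨LinearEquiv.ofBijective (Rationalization.lift e.toAddMonoidHom fun g q p m => ?_)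
    e.bijective⟩
  rw [TrivialModule.single_smul, TrivialModule.single_smul]
  refine (he _ _).trans ((Eq.trans ?_ (congrArg (fun x : ℚ => q * x) (he p m)).symm))
  change (1 * t m) • (q * p) = q * (t m • p)
  rw [one_mul, mul_smul_comm]

end BaseChange

theorem nonempty_trivialZMod_equiv_trivialModule (K : Type) [Group K] :
    Nonempty (trivialZMod K ≃ₗ[MonoidAlgebra ℤ K] TrivialModule ℤ K) := by
  let ρ : Representation ℤ K ℤ := (Rep.trivial ℤ K ℤ).ρ
  let e : ρ.asModule ≃+ TrivialModule ℤ K := ρ.asModuleEquiv.toAddEquiv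
  let t : TrivialModule ℤ K → ℤ := fun m => m
  let φ : ρ.asModule →ₗ[MonoidAlgebra ℤ K] TrivialModule ℤ K :=
    linearMapOfSingle e.toAddMonoidHom fun g a m => by
      rw [TrivialModule.single_smul]
      have h : ρ.asModuleEquiv ((MonoidAlgebra.single g a : MonoidAlgebra ℤ K) • m) =
          a * ρ.asModuleEquiv m := by
        rw [Representation.asModuleEquiv_map_smul, Representation.asAlgebraHom_single]
        rfl
      exact h
  exact ⟨LinearEquiv.ofBijective φ e.bijective⟩

theorem HasFreeResOfRanks.hasEulerChar {K : Type} [Group K] {n : ℕ} {r : ℕ → ℕ}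
    (h : HasFreeResOfRanks K n r) :
    HasEulerChar (kaplanskyTrace (Int.castRingHom ℚ) K) n (TrivialModule ℤ K)
      (∑ i ∈ Finset.range (n + 1), (-1 : ℚ) ^ i * r i) := by
  obtain ⟨P, hP, hn⟩ := h
  obtain ⟨e⟩ := nonempty_trivialZMod_equiv_trivialModule K
  let e' := (HomologicalComplex.singleObjXSelf (ComplexShape.down ℕ) 0 (trivialZMod K)).toLinearEquiv
  refine HasEulerChar.of_linearEquiv ?_ (e'.trans e)
  refine HasEulerChar.of_complex n (fun k => P.complex.X k) (fun k => (P.complex.d (k + 1) k).hom)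
    (P.π.f 0).hom ?_ ?_ (fun k => ?_) r (fun k => ?_) fun k hk => ?_
  · exact (ModuleCat.epi_iff_surjective (P.π.f 0)).mp inferInstance
  · exact (ShortComplex.ShortExact.moduleCat_exact_iff_function_exact _).mp P.exact₀
  · exact (ShortComplex.ShortExact.moduleCat_exact_iff_function_exact _).mp (P.exact_succ k)
  · obtain ⟨e⟩ := hP k
    exact (HasTraceRank.free (kaplanskyTrace_one _) (r k)).of_linearEquiv e.symm
  · obtain ⟨e⟩ := hP k
    rw [hn k hk] at e
    exact e.toEquiv.subsingleton

theorem HasFreeResOfRanks.hasEulerChar_rat {K : Type} [Group K] {n : ℕ} {r : ℕ → ℕ}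
    (h : HasFreeResOfRanks K n r) :
    HasEulerChar (kaplanskyTrace (RingHom.id ℚ) K) n (TrivialModule ℚ K)
      (∑ i ∈ Finset.range (n + 1), (-1 : ℚ) ^ i * r i) := by
  obtain ⟨e⟩ := nonempty_rationalization_equiv_trivialModule K
  exact h.hasEulerChar.rationalization.of_linearEquiv e

section TrivialCoefficients

open MonoidAlgebra

variable {k : Type} [CommRing k] {G H H' : Type} [Group G] [Group H] [Group H']

/-- The identity map between the trivial modules of two groups. -/
def TrivialModule.cast (k G H : Type) [CommRing k] [Group G] [Group H] :
    TrivialModule k G ≃+ TrivialModule k H :=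
  AddEquiv.refl k

theorem TrivialModule.cast_single_smul (g : G) (h : H) (a : k) (m : TrivialModule k G) :
    TrivialModule.cast k G H ((single g a : MonoidAlgebra k G) • m) =
      (single h a : MonoidAlgebra k H) • TrivialModule.cast k G H m := by
  rw [TrivialModule.single_smul, TrivialModule.single_smul]
  rfl

namespace InducedModule

variable {j : H →* G} (hj : Function.Injective j) {j' : H' →* G} (hj' : Function.Injective j')

/-- The augmentation of the module induced from a trivial module. -/
noncomputable def augmentation :
    InducedModule j hj (TrivialModule k H) →ₗ[MonoidAlgebra k G] TrivialModule k G :=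
  lift hj (fun _ => (TrivialModule.cast k H G).toAddMonoidHom) fun _ _ _ m =>
    TrivialModule.cast_single_smul _ _ _ m

theorem augmentation_of (c : G ⧸ j.range) (m : TrivialModule k H) :
    augmentation hj (of hj c m) = TrivialModule.cast k H G m :=
  lift_of hj _ _ c m

/-- The map of permutation modules attached to an equivariant map of coset spaces. -/
noncomputable def cosetMap (φ : G ⧸ j.range → G ⧸ j'.range) (hφ : ∀ (g : G) c, φ (g • c) = g • φ c) :
    InducedModule j hj (TrivialModule k H) →ₗ[MonoidAlgebra k G]
      InducedModule j' hj' (TrivialModule k H') :=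
  lift hj (fun c => (of hj' (φ c)).comp (TrivialModule.cast k H H').toAddMonoidHom)
    fun g a c m => by
      simp only [AddMonoidHom.comp_apply, AddEquiv.toAddMonoidHom_eq_coe, AddMonoidHom.coe_coe]
      rw [single_smul_of, hφ, TrivialModule.cast_single_smul _ (cosetCocycle j' g (φ c))]

theorem cosetMap_of (φ : G ⧸ j.range → G ⧸ j'.range) (hφ : ∀ (g : G) c, φ (g • c) = g • φ c)
    (c : G ⧸ j.range) (m : TrivialModule k H) :
    cosetMap hj hj' φ hφ (of hj c m) = of hj' (φ c) (TrivialModule.cast k H H' m) :=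
  lift_of hj _ _ c m

end InducedModule

theorem exists_augmentation_section {j : H →* G} (hj : Function.Injective j)
    (hI : j.range.index ≠ 0) :
    ∃ i : TrivialModule ℚ G →ₗ[MonoidAlgebra ℚ G] InducedModule j hj (TrivialModule ℚ H),
      ∀ m, InducedModule.augmentation hj (i m) = m := by
  let _ : Fintype (G ⧸ j.range) := Subgroup.fintypeOfIndexNeZero hI
  let u : ℚ := (j.range.index : ℚ)⁻¹
  let v (m : TrivialModule ℚ G) : TrivialModule ℚ H :=
    TrivialModule.cast ℚ G H ((single 1 u : MonoidAlgebra ℚ G) • m)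
  have hv : ∀ m m', v (m + m') = v m + v m' := fun m m' => by
    simp only [v, smul_add, map_add]
  have hv' : ∀ (g : G) (h : H) (a : ℚ) m, v ((single g a : MonoidAlgebra ℚ G) • m) =
      (single h a : MonoidAlgebra ℚ H) • v m := fun g h a m => by
    simp only [v]
    rw [← TrivialModule.cast_single_smul g, ← mul_smul, ← mul_smul, single_mul_single,
      single_mul_single, mul_comm u a, one_mul, mul_one]
  let i : TrivialModule ℚ G →ₗ[MonoidAlgebra ℚ G] InducedModule j hj (TrivialModule ℚ H) :=
    linearMapOfSingle (AddMonoidHom.mk' (fun m => ∑ c, InducedModule.of hj c (v m))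
      fun m m' => by simp only [hv, map_add, Finset.sum_add_distrib]) fun g a m => by
        simp only [AddMonoidHom.mk'_apply]
        rw [Finset.smul_sum, ← Equiv.sum_comp (MulAction.toPerm g)]
        refine Finset.sum_congr rfl fun c _ => ?_
        rw [InducedModule.single_smul_of, hv' g (cosetCocycle j g c)]
        rfl
  refine ⟨i, fun m => ?_⟩
  change InducedModule.augmentation hj (∑ c, InducedModule.of hj c (v m)) = m
  rw [map_sum]
  simp only [InducedModule.augmentation_of]
  rw [Finset.sum_const, Finset.card_univ, ← Nat.card_eq_fintype_card]
  have : TrivialModule.cast ℚ H G (v m) = (single 1 u : MonoidAlgebra ℚ G) • m := rfl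
  rw [this, ← Nat.cast_smul_eq_nsmul (MonoidAlgebra ℚ G), ← mul_smul]
  have h1 : ((Nat.card (G ⧸ j.range) : ℕ) : MonoidAlgebra ℚ G) * single 1 u = 1 := by
    rw [← nsmul_eq_mul, smul_single, one_def]
    congr 1
    rw [nsmul_eq_mul]
    exact mul_inv_cancel₀ (Nat.cast_ne_zero.mpr hI)
  rw [h1, one_smul]

theorem EulerCharRel.hasEulerChar {q : ℚ} (h : EulerCharRel G q) :
    ∃ n, HasEulerChar (kaplanskyTrace (RingHom.id ℚ) G) n (TrivialModule ℚ G) q := by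
  obtain ⟨K, n, r, hK, hr, rfl⟩ := h
  have hj : Function.Injective K.subtype := K.subtype_injective
  have h1 := hr.hasEulerChar_rat
  obtain ⟨i, hi⟩ := exists_augmentation_section hj (by rwa [K.range_subtype])
  obtain ⟨e, he⟩ := (h1.induced hj).exists_of_retract i _ hi
  let _ := Module.compHom (TrivialModule ℚ G) (mapDomainRingHom ℚ K.subtype)
  have hs : ∀ (s : MonoidAlgebra ℚ K) (v : TrivialModule ℚ G),
      s • v = mapDomainRingHom ℚ K.subtype s • v := fun _ _ => rfl
  have h2 := he.restrict K hK hs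
  let φ : TrivialModule ℚ G →ₗ[MonoidAlgebra ℚ K] TrivialModule ℚ K :=
    linearMapOfSingle (TrivialModule.cast ℚ G K).toAddMonoidHom fun g a m => by
      rw [hs, mapDomainRingHom_apply, mapDomain_single]
      exact TrivialModule.cast_single_smul _ _ _ _
  have h3 := h2.of_linearEquiv
    (LinearEquiv.ofBijective φ (TrivialModule.cast ℚ G K).bijective)
  have h4 := h1.unique (kaplanskyTrace_mul_comm _) h3
  refine ⟨n, ?_⟩
  rw [h4, mul_div_cancel_left₀ _ (Nat.cast_ne_zero.mpr hK)]
  exact he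

end TrivialCoefficients

namespace IsAmalgamatedProduct

variable {C A B G : Type} [Group C] [Group A] [Group B] [Group G]
  {f : C →* A} {g : C →* B} {iA : A →* G} {iB : B →* G}

theorem comp_apply_eq (h : IsAmalgamatedProduct f g iA iB) (c : C) : iA (f c) = iB (g c) :=
  DFunLike.congr_fun h.1 c

/-- The vertex groups as a family indexed by `Bool`. -/
def VertexGroup (A B : Type) : Bool → Type
  | true => A
  | false => B

instance : ∀ b, Group (VertexGroup A B b)
  | true => inferInstanceAs (Group A)
  | false => inferInstanceAs (Group B)

/-- The inclusions of the edge group into the vertex groups. -/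
def edgeInclusion (f : C →* A) (g : C →* B) : ∀ b, C →* VertexGroup A B b
  | true => f
  | false => g

theorem injective (h : IsAmalgamatedProduct f g iA iB) (hf : Function.Injective f)
    (hg : Function.Injective g) : Function.Injective iA ∧ Function.Injective iB := by
  let φ := edgeInclusion f g
  have hφ : ∀ b, Function.Injective (φ b)
    | true => hf
    | false => hg
  let kA : A →* Monoid.PushoutI φ := Monoid.PushoutI.of (φ := φ) true
  let kB : B →* Monoid.PushoutI φ := Monoid.PushoutI.of (φ := φ) false
  have hk : kA.comp f = kB.comp g :=
    (Monoid.PushoutI.of_comp_eq_base true).trans (Monoid.PushoutI.of_comp_eq_base false).symm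
  obtain ⟨k, ⟨h1, h2⟩, -⟩ := h.2 (Monoid.PushoutI φ) inferInstance kA kB hk
  constructor
  · refine Function.Injective.of_comp (f := k) ?_
    rw [← MonoidHom.coe_comp, h1]
    exact Monoid.PushoutI.of_injective hφ true
  · refine Function.Injective.of_comp (f := k) ?_
    rw [← MonoidHom.coe_comp, h2]
    exact Monoid.PushoutI.of_injective hφ false

theorem eq_top_of_range_le (h : IsAmalgamatedProduct f g iA iB) (S : Subgroup G)
    (hA : ∀ a, iA a ∈ S) (hB : ∀ b, iB b ∈ S) (x : G) : x ∈ S := by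
  obtain ⟨k, ⟨h1, h2⟩, -⟩ := h.2 S inferInstance (iA.codRestrict S hA) (iB.codRestrict S hB)
    (MonoidHom.ext fun c => Subtype.ext (h.comp_apply_eq c))
  have : S.subtype.comp k = MonoidHom.id G := by
    refine (h.2 G inferInstance iA iB h.1).unique ⟨?_, ?_⟩ ⟨rfl, rfl⟩
    · rw [MonoidHom.comp_assoc, h1]
      rfl
    · rw [MonoidHom.comp_assoc, h2]
      rfl
  rw [← MonoidHom.id_apply G x, ← this]
  exact (k x).2

/-- The regular action of `G` on the first factor of `G × ℚ`. -/
def translationPerm (G : Type) [Group G] : G →* Equiv.Perm (G × ℚ) where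
  toFun x := (Equiv.mulRight x⁻¹).prodCongr (Equiv.refl ℚ)
  map_one' := Equiv.ext fun p => by simp
  map_mul' x y := Equiv.ext fun p => Prod.ext (by simp [mul_assoc]) rfl

/-- A function invariant under right multiplication by `C` is the difference of a function
invariant under `A` and one invariant under `B`. -/
theorem exists_splitting (h : IsAmalgamatedProduct f g iA iB) (ψ : G → ℚ)
    (hψ : ∀ x c, ψ (x * iA (f c)) = ψ x) :
    ∃ w : G → ℚ, (∀ x a, w (x * iA a) = w x) ∧
      ∀ x b, w (x * iB b) - ψ (x * iB b) = w x - ψ x := by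
  let σ : Equiv.Perm (G × ℚ) := (Equiv.refl G).prodShear fun x => Equiv.addRight (ψ x)
  let kA : A →* Equiv.Perm (G × ℚ) := (translationPerm G).comp iA
  let kB : B →* Equiv.Perm (G × ℚ) :=
    (MulAut.conj σ).toMonoidHom.comp ((translationPerm G).comp iB)
  have hkA : ∀ a p, kA a p = (p.1 * (iA a)⁻¹, p.2) := fun a p => rfl
  have hkB : ∀ b p, kB b p = (p.1 * (iB b)⁻¹, p.2 - ψ p.1 + ψ (p.1 * (iB b)⁻¹)) :=
    fun b p => by
      rw [sub_eq_add_neg]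
      rfl
  obtain ⟨k, ⟨h1, h2⟩, -⟩ := h.2 _ inferInstance kA kB (MonoidHom.ext fun c => Equiv.ext fun p => by
    change kA (f c) p = kB (g c) p
    rw [hkA, hkB, ← h.comp_apply_eq, ← map_inv, ← map_inv, hψ]
    simp)
  have hA : ∀ a, k (iA a) = kA a := fun a => DFunLike.congr_fun h1 a
  have hB : ∀ b, k (iB b) = kB b := fun b => DFunLike.congr_fun h2 b
  let S : Subgroup G :=
    { carrier := {x | ∀ p, (k x p).1 = p.1 * x⁻¹}
      mul_mem' := fun {x y} hx hy p => by
        rw [map_mul, Equiv.Perm.mul_apply, hx, hy, mul_inv_rev, mul_assoc]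
      one_mem' := fun p => by simp
      inv_mem' := fun {x} hx p => by
        have := hx (k x⁻¹ p)
        rw [← Equiv.Perm.mul_apply, ← map_mul, mul_inv_cancel, map_one, Equiv.Perm.one_apply] at this
        rw [this]
        simp }
  have hS : ∀ x p, (k x p).1 = p.1 * x⁻¹ := h.eq_top_of_range_le S
    (fun a p => by rw [hA, hkA]) (fun b p => by rw [hB, hkB])
  refine ⟨fun x => (k x⁻¹ (1, 0)).2, fun x a => ?_, fun x b => ?_⟩
  · simp only [mul_inv_rev, map_mul, Equiv.Perm.mul_apply]
    rw [← map_inv, hA, hkA]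
  · simp only [mul_inv_rev, map_mul, Equiv.Perm.mul_apply]
    rw [← map_inv, hB, hkB, hS]
    simp

section Sequence

open MonoidAlgebra InducedModule

variable (hA : Function.Injective iA) (hB : Function.Injective iB)
  (hC : Function.Injective (iA.comp f))

theorem range_le_left : (iA.comp f).range ≤ iA.range := by
  rintro _ ⟨c, rfl⟩
  exact ⟨f c, rfl⟩

theorem range_le_right (h : IsAmalgamatedProduct f g iA iB) : (iA.comp f).range ≤ iB.range := by
  rintro _ ⟨c, rfl⟩
  exact ⟨g c, (h.comp_apply_eq c).symm⟩

theorem quotientMapOfLE_smul {S T : Subgroup G} (hST : S ≤ T) (x : G) (c : G ⧸ S) :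
    Subgroup.quotientMapOfLE hST (x • c) = x • Subgroup.quotientMapOfLE hST c := by
  induction c using QuotientGroup.induction_on
  rfl

/-- The map of permutation modules induced by `G ⧸ C → G ⧸ A` and `G ⧸ C → G ⧸ B`. -/
noncomputable def edgeMap (h : IsAmalgamatedProduct f g iA iB) :
    InducedModule (iA.comp f) hC (TrivialModule ℚ C) →ₗ[MonoidAlgebra ℚ G]
      InducedModule iA hA (TrivialModule ℚ A) × InducedModule iB hB (TrivialModule ℚ B) :=
  (cosetMap hC hA _ (quotientMapOfLE_smul range_le_left)).prod
    (cosetMap hC hB _ (quotientMapOfLE_smul h.range_le_right))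

/-- The difference of the two augmentations. -/
noncomputable def vertexMap :
    InducedModule iA hA (TrivialModule ℚ A) × InducedModule iB hB (TrivialModule ℚ B)
      →ₗ[MonoidAlgebra ℚ G] TrivialModule ℚ G :=
  (augmentation hA).coprod (-augmentation hB)

theorem vertexMap_surjective : Function.Surjective (vertexMap hA hB) := fun m =>
  ⟨(InducedModule.of hA ((1 : G) : G ⧸ iA.range) ((TrivialModule.cast ℚ A G).symm m), 0), by
    simp [vertexMap, augmentation_of]⟩

/-- The pairing of a permutation module with a function on cosets. -/
noncomputable def pairing {H : Type} [Group H] {j : H →* G} (hj : Function.Injective j)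
    (φ : G ⧸ j.range → ℚ) : InducedModule j hj (TrivialModule ℚ H) →+ ℚ :=
  (Finsupp.liftAddHom fun c => AddMonoidHom.mulLeft (φ c) : (G ⧸ j.range →₀ ℚ) →+ ℚ)

theorem pairing_of {H : Type} [Group H] {j : H →* G} (hj : Function.Injective j)
    (φ : G ⧸ j.range → ℚ) (c : G ⧸ j.range) (m : ℚ) :
    pairing hj φ (InducedModule.of (M := TrivialModule ℚ H) hj c m) = φ c * m :=
  Finsupp.liftAddHom_apply_single (N := ℚ) (fun c => AddMonoidHom.mulLeft (φ c)) c m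

open scoped Classical in
theorem pairing_indicator {H : Type} [Group H] {j : H →* G} (hj : Function.Injective j)
    (c : G ⧸ j.range) (x : InducedModule j hj (TrivialModule ℚ H)) :
    pairing hj (fun c' => if c' = c then 1 else 0) x = eval hj x c := by
  have : pairing hj (fun c' => if c' = c then 1 else 0) =
      (Finsupp.applyAddHom c : (G ⧸ j.range →₀ ℚ) →+ ℚ) := addHom_ext fun c' m => by
    refine (pairing_of hj _ c' m).trans (Eq.trans ?_ (Finsupp.single_apply (M := ℚ)).symm)
    have hite : ∀ m : ℚ, (if c' = c then 1 else 0) * m = if c' = c then m else 0 := fun m => by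
      rw [ite_mul, one_mul, zero_mul]
    exact hite m
  exact DFunLike.congr_fun this x

theorem edgeMap_injective (h : IsAmalgamatedProduct f g iA iB) :
    Function.Injective (edgeMap hA hB hC h) := by
  classical
  rw [injective_iff_map_eq_zero]
  intro x hx
  refine ext_eval fun c => ?_
  rw [← pairing_indicator]
  obtain ⟨w, hw, hw'⟩ := h.exists_splitting
    (fun y => if (y : G ⧸ (iA.comp f).range) = c then 1 else 0) fun y c' => by
      congr 2
      rw [QuotientGroup.eq]
      exact ⟨c'⁻¹, by simp⟩
  let α : G ⧸ iA.range → ℚ := Quotient.lift w fun y z hyz => by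
    obtain ⟨a, ha⟩ := QuotientGroup.leftRel_apply.mp hyz
    rw [← hw y a, ha, mul_inv_cancel_left]
  let β : G ⧸ iB.range → ℚ :=
    Quotient.lift (fun y => w y - if (y : G ⧸ (iA.comp f).range) = c then 1 else 0) fun y z hyz => by
      obtain ⟨b, hb⟩ := QuotientGroup.leftRel_apply.mp hyz
      have := hw' y b
      rw [hb, mul_inv_cancel_left] at this
      exact this.symm
  have key : pairing hC (fun c' => if c' = c then 1 else 0) =
      ((pairing hA α).comp (AddMonoidHom.fst _ _) - (pairing hB β).comp (AddMonoidHom.snd _ _)).comp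
        (edgeMap hA hB hC h).toAddMonoidHom := addHom_ext fun c' m => by
    refine (pairing_of hC _ c' m).trans (Eq.symm ?_)
    refine (congrArg₂ (fun y z => pairing hA α y - pairing hB β z)
      (cosetMap_of hC hA _ (quotientMapOfLE_smul range_le_left) c' m)
      (cosetMap_of hC hB _ (quotientMapOfLE_smul h.range_le_right) c' m)).trans ?_
    refine (congrArg₂ (· - ·) (pairing_of hA α _ m) (pairing_of hB β _ m)).trans ?_
    induction c' using QuotientGroup.induction_on with
    | H y =>
      have hαβ : ∀ u v m : ℚ, u * m - (u - v) * m = v * m := fun u v m => by ring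
      exact hαβ (w y) _ m
  refine (DFunLike.congr_fun key x).trans ?_
  change pairing hA α (edgeMap hA hB hC h x).1 - pairing hB β (edgeMap hA hB hC h x).2 = 0
  rw [hx]
  simp

theorem edgeMap_of (h : IsAmalgamatedProduct f g iA iB) (x : G) (m : TrivialModule ℚ C) :
    edgeMap hA hB hC h (InducedModule.of hC x m) =
      (InducedModule.of hA x (TrivialModule.cast ℚ C A m),
        InducedModule.of hB x (TrivialModule.cast ℚ C B m)) :=
  Prod.ext (cosetMap_of hC hA _ (quotientMapOfLE_smul range_le_left) _ m)
    (cosetMap_of hC hB _ (quotientMapOfLE_smul h.range_le_right) _ m)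

theorem exact_edgeMap_vertexMap (h : IsAmalgamatedProduct f g iA iB) :
    Function.Exact (edgeMap hA hB hC h) (vertexMap hA hB) := by
  let Q := (InducedModule iA hA (TrivialModule ℚ A) × InducedModule iB hB (TrivialModule ℚ B)) ⧸
    LinearMap.range (edgeMap hA hB hC h)
  let θ := (LinearMap.range (edgeMap hA hB hC h)).mkQ
  let wA (x : G) (m : ℚ) : Q :=
    θ (InducedModule.of (M := TrivialModule ℚ A) hA (x : G ⧸ iA.range) m, 0)
  let wB (x : G) (m : ℚ) : Q :=
    θ (0, InducedModule.of (M := TrivialModule ℚ B) hB (x : G ⧸ iB.range) m)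
  have hAB : ∀ x m, wA x m = -wB x m := fun x m => by
    rw [eq_neg_iff_add_eq_zero]
    simp only [wA, wB, θ]
    rw [← map_add, Prod.mk_add_mk, add_zero, zero_add, Submodule.mkQ_apply,
      Submodule.Quotient.mk_eq_zero]
    exact ⟨_, edgeMap_of hA hB hC h x m⟩
  let S : Subgroup G :=
    { carrier := {y | ∀ x m, wA (x * y) m = wA x m}
      mul_mem' := fun {y z} hy hz x m => by rw [← mul_assoc, hz, hy]
      one_mem' := fun x m => by rw [mul_one]
      inv_mem' := fun {y} hy x m => by rw [← hy, inv_mul_cancel_right] }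
  have hS : ∀ y x m, wA (x * y) m = wA x m := h.eq_top_of_range_le S
    (fun a x m => by
      simp only [wA]
      rw [QuotientGroup.mk_mul_of_mem x (MonoidHom.mem_range.mpr ⟨a, rfl⟩ : iA a ∈ iA.range)])
    fun b x m => by
      rw [hAB, hAB]
      simp only [wB]
      rw [QuotientGroup.mk_mul_of_mem x (MonoidHom.mem_range.mpr ⟨b, rfl⟩ : iB b ∈ iB.range)]
  have hw : ∀ x m, wA x m = wA 1 m := fun x m => by rw [← hS x 1 m, one_mul]
  have hwB : ∀ x m, wB x m = -wA 1 m := fun x m => by rw [← hw x m, hAB, neg_neg]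
  let W : TrivialModule ℚ G →+ Q := (θ.toAddMonoidHom.comp (AddMonoidHom.inl _ _)).comp
    ((InducedModule.of hA ((1 : G) : G ⧸ iA.range)).comp (TrivialModule.cast ℚ G A).toAddMonoidHom)
  have key : θ.toAddMonoidHom = W.comp (vertexMap hA hB).toAddMonoidHom := by
    refine AddMonoidHom.ext_iff.mpr fun ⟨y, z⟩ => ?_
    have h1 : (θ.toAddMonoidHom.comp (AddMonoidHom.inl _ _)) =
        W.comp (augmentation hA).toAddMonoidHom := addHom_ext fun c m => by
      induction c using QuotientGroup.induction_on with
      | H x =>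
        refine (hw x m).trans (congrArg W (augmentation_of hA _ m)).symm
    have h2 : (θ.toAddMonoidHom.comp (AddMonoidHom.inr _ _)) =
        -W.comp (augmentation hB).toAddMonoidHom := addHom_ext fun c m => by
      induction c using QuotientGroup.induction_on with
      | H x =>
        exact (hwB x m).trans (congrArg (fun u => -W u) (augmentation_of hB _ m)).symm
    have h1' : θ (y, 0) = W (augmentation hA y) := DFunLike.congr_fun h1 y
    have h2' : θ (0, z) = -W (augmentation hB z) := DFunLike.congr_fun h2 z
    have h3 : θ (y, z) = θ (y, 0) + θ (0, z) := by
      rw [← map_add, Prod.mk_add_mk, add_zero, zero_add]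
    have h4 : vertexMap hA hB (y, z) = augmentation hA y + -augmentation hB z := rfl
    change θ (y, z) = W (vertexMap hA hB (y, z))
    rw [h3, h1', h2', h4, map_add, map_neg]
  intro y
  constructor
  · intro hy
    have : θ y = W (vertexMap hA hB y) := DFunLike.congr_fun key y
    rw [hy, map_zero] at this
    exact (Submodule.Quotient.mk_eq_zero _).mp this
  · rintro ⟨x, rfl⟩
    have : (vertexMap hA hB).toAddMonoidHom.comp (edgeMap hA hB hC h).toAddMonoidHom = 0 :=
      addHom_ext fun c m => by
        induction c using QuotientGroup.induction_on with
        | H x =>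
          refine (congrArg (vertexMap hA hB) (edgeMap_of hA hB hC h x m)).trans ?_
          change augmentation hA (InducedModule.of hA (x : G ⧸ iA.range)
              (TrivialModule.cast ℚ C A m)) +
            -augmentation hB (InducedModule.of hB (x : G ⧸ iB.range)
              (TrivialModule.cast ℚ C B m)) = (0 : TrivialModule ℚ G)
          rw [augmentation_of, augmentation_of]
          exact add_neg_cancel _
    exact DFunLike.congr_fun this x

end Sequence

end IsAmalgamatedProduct

/-- If `G = A *_C B` is an amalgamated free product of groups of type `VFP` along a
type-`VFP` group `C` (with injective edge maps), and `G` itself is of type `VFP`, then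
`χ(G) = χ(A) + χ(B) − χ(C)`. -/
theorem eulerChar_amalgam (C A B G : Type) [Group C] [Group A] [Group B] [Group G]
    (f : C →* A) (g : C →* B) (iA : A →* G) (iB : B →* G)
    (hf : Function.Injective f) (hg : Function.Injective g)
    (hpush : IsAmalgamatedProduct f g iA iB)
    (hA : TypeVFP A) (hB : TypeVFP B) (hC : TypeVFP C) (hG : TypeVFP G)
    (a b c q : ℚ) (ha : EulerCharRel A a) (hb : EulerCharRel B b)
    (hc : EulerCharRel C c) (hq : EulerCharRel G q) :
    q = a + b - c := by
  obtain ⟨hiA, hiB⟩ := hpush.injective hf hg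
  have hiC : Function.Injective (iA.comp f) := hiA.comp hf
  obtain ⟨l, hl⟩ := ha.hasEulerChar
  obtain ⟨m, hm⟩ := hb.hasEulerChar
  obtain ⟨n, hn⟩ := hc.hasEulerChar
  obtain ⟨p, hp⟩ := hq.hasEulerChar
  let N := max (max l m) (max n p)
  have h1 := ((hl.induced hiA).mono (m := N) (by omega)).prod
    ((hm.induced hiB).mono (m := N) (by omega))
  have h2 := ((hn.induced hiC).mono (m := N) (by omega)).extension (hp.mono (m := N) (by omega))
    (IsAmalgamatedProduct.edgeMap hiA hiB hiC hpush) (IsAmalgamatedProduct.vertexMap hiA hiB)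
    (IsAmalgamatedProduct.edgeMap_injective hiA hiB hiC hpush)
    (IsAmalgamatedProduct.exact_edgeMap_vertexMap hiA hiB hiC hpush)
    (IsAmalgamatedProduct.vertexMap_surjective hiA hiB)
  have h3 := h1.unique (kaplanskyTrace_mul_comm _) h2
  linarith
end
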